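/- arXiv:1703.00744 — 10 statements merged into one kernel-verified Lean document; each statement's English description precedes it below -/
import Mathlib

section
/- Let f : ℝⁿ → ℝ be a polynomial and let K ⊆ ℝⁿ be a convex body. Then there exist constants C_{f,K} > 0 (depending only on f and K) and r_K ∈ ℕ (depending only on K) such that for all integers r ≥ r_K one has f̲^(r)_K − f_min,K ≤ C_{f,K}/√r. -/
open MeasureTheory Real

/-- Lasserre's measure-based upper bound `f̲^(r)_K`: the infimum of `∫_K h f`
over sum-of-squares polynomial densities `h` of degree at most `2r` with `∫_K h = 1`. -/
noncomputable def lasserreBound (n : ℕ) (f : (Fin n → ℝ) → ℝ) (K : Set (Fin n → ℝ)) (r : ℕ) : ℝ :=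
  sInf { y : ℝ | ∃ (m : ℕ) (p : Fin m → MvPolynomial (Fin n) ℝ),
    (∀ i, (p i).totalDegree ≤ r) ∧
    (∫ x in K, MvPolynomial.eval x (∑ i, p i ^ 2)) = 1 ∧
    y = ∫ x in K, MvPolynomial.eval x (∑ i, p i ^ 2) * f x }

/-!
Let `a` minimize `f` over `K`, and test the Lasserre bound against the squares of the powers of
`1 - |x - a|² / (2R²)`, where `R` bounds the Euclidean distance from `a` on `K`. These densities
concentrate around `a`: the homothety of centre `a` and ratio `1/2` maps `K` into itself, divides
`t = |x - a|² / (2R²)` by `4` and volumes by `2ⁿ`, and `√(M t) (1 - t)^M ≤ (1 - t/4)^M` by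
Bernoulli's inequality. Hence the mean of `√t` for the density `(1 - t)^M` is at most `2ⁿ / √M`,
and a Lipschitz function exceeds `f a` by `O(1 / √M)` on average.
-/

lemma sqrt_mul_mul_one_sub_pow_le {t : ℝ} (ht₀ : 0 ≤ t) (ht₁ : t ≤ 1) (M : ℕ) :
    √(M * t) * (1 - t) ^ M ≤ (1 - t / 4) ^ M := by
  have hMt : 0 ≤ M * t := by positivity
  have sqrt_le : √(M * t) ≤ 1 + M * (3 / 4 * t) := by
    rw [Real.sqrt_le_left (by positivity)]
    nlinarith [sq_nonneg (M * t - 1)]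
  have bernoulli : 1 + M * (3 / 4 * t) ≤ (1 + 3 / 4 * t) ^ M :=
    one_add_mul_le_pow (by linarith) M
  calc √(M * t) * (1 - t) ^ M
      ≤ (1 + 3 / 4 * t) ^ M * (1 - t) ^ M :=
        mul_le_mul_of_nonneg_right (sqrt_le.trans bernoulli) (pow_nonneg (by linarith) M)
    _ = ((1 + 3 / 4 * t) * (1 - t)) ^ M := (mul_pow _ _ M).symm
    _ ≤ (1 - t / 4) ^ M := pow_le_pow_left₀ (by nlinarith) (by nlinarith) M

section Homothety

variable {E : Type*} [NormedAddCommGroup E] [NormedSpace ℝ E] [MeasurableSpace E] [BorelSpace E]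
  [FiniteDimensional ℝ E] {μ : Measure E} [μ.IsAddHaarMeasure] {K : Set E} {a : E}

lemma pow_finrank_mul_setIntegral_le_of_le_comp_homothety (hK : MeasurableSet K)
    (hstar : StarConvex ℝ a K) {s : ℝ} (hs₀ : 0 < s) (hs₁ : s ≤ 1) {F G : E → ℝ}
    (hF : ∀ x ∈ K, 0 ≤ F x) (hG : ∀ x ∈ K, 0 ≤ G x) (hGint : IntegrableOn G K μ)
    (hFG : ∀ x ∈ K, F x ≤ G (a + s • (x - a))) :
    s ^ Module.finrank ℝ E * ∫ x in K, F x ∂μ ≤ ∫ x in K, G x ∂μ := by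
  set F' := K.indicator F
  set G' := K.indicator G
  have hF' : ∀ x, 0 ≤ F' x := fun _ => Set.indicator_nonneg hF _
  have hG' : ∀ x, 0 ≤ G' x := fun _ => Set.indicator_nonneg hG _
  have hG'int : Integrable G' μ := (integrable_indicator_iff hK).2 hGint
  have hF'G' : ∀ x, F' x ≤ G' (a + s • (x - a)) := fun x => by
    by_cases hx : x ∈ K
    · have hsx : a + s • (x - a) ∈ K := hstar.add_smul_sub_mem hx hs₀.le hs₁
      simpa only [F', G', Set.indicator_of_mem hx, Set.indicator_of_mem hsx] using hFG x hx
    · simpa only [F', Set.indicator_of_notMem hx] using hG' _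
  have change_of_variables :
      ∫ x, G' (a + s • (x - a)) ∂μ = (s ^ Module.finrank ℝ E)⁻¹ * ∫ x, G' x ∂μ := by
    rw [integral_sub_right_eq_self (fun x => G' (a + s • x)) a,
      Measure.integral_comp_smul_of_nonneg μ (fun x => G' (a + x)) s (hR := hs₀.le),
      integral_add_left_eq_self G' a, smul_eq_mul]
  have integral_le : ∫ x, F' x ∂μ ≤ ∫ x, G' (a + s • (x - a)) ∂μ :=
    integral_mono_of_nonneg (.of_forall hF')
      (((hG'int.comp_add_left a).comp_smul hs₀.ne').comp_sub_right a) (.of_forall hF'G')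
  rwa [change_of_variables, integral_indicator hK, integral_indicator hK,
    le_inv_mul_iff₀ (by positivity)] at integral_le

variable {q : E → ℝ}

lemma sqrt_mul_setIntegral_sqrt_mul_one_sub_pow_le (hK : IsCompact K) (hstar : StarConvex ℝ a K)
    (hq : ContinuousOn q K) (hq₀ : ∀ x ∈ K, 0 ≤ q x) (hq₁ : ∀ x ∈ K, q x ≤ 1)
    (hhalf : ∀ x ∈ K, q (a + (1 / 2 : ℝ) • (x - a)) = q x / 4) (M : ℕ) :
    √M * ∫ x in K, √(q x) * (1 - q x) ^ M ∂μ ≤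
      2 ^ Module.finrank ℝ E * ∫ x in K, (1 - q x) ^ M ∂μ := by
  have hpow : ∀ x ∈ K, 0 ≤ (1 - q x) ^ M := fun x hx => pow_nonneg (sub_nonneg.2 (hq₁ x hx)) M
  have hint : IntegrableOn (fun x => (1 - q x) ^ M) K μ :=
    ((continuousOn_const.sub hq).pow M).integrableOn_compact hK
  have hscale := pow_finrank_mul_setIntegral_le_of_le_comp_homothety (μ := μ)
    (F := fun x => √(M * q x) * (1 - q x) ^ M) hK.measurableSet hstar one_half_pos
    one_half_lt_one.le
    (fun x hx => mul_nonneg (Real.sqrt_nonneg _) (hpow x hx)) hpow hint fun x hx => by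
      simpa only [hhalf x hx] using sqrt_mul_mul_one_sub_pow_le (hq₀ x hx) (hq₁ x hx) M
  simp only [Real.sqrt_mul (Nat.cast_nonneg M), mul_assoc, integral_const_mul] at hscale
  rwa [one_div, inv_pow, inv_mul_le_iff₀ (by positivity)] at hscale

lemma sqrt_mul_setIntegral_one_sub_pow_mul_le (hK : IsCompact K) (hstar : StarConvex ℝ a K)
    (hq : ContinuousOn q K) (hq₀ : ∀ x ∈ K, 0 ≤ q x) (hq₁ : ∀ x ∈ K, q x ≤ 1)
    (hhalf : ∀ x ∈ K, q (a + (1 / 2 : ℝ) • (x - a)) = q x / 4) {f : E → ℝ}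
    (hf : ContinuousOn f K) {b L : ℝ} (hL : 0 ≤ L) (hfq : ∀ x ∈ K, f x ≤ b + L * √(q x)) (M : ℕ) :
    √M * ∫ x in K, (1 - q x) ^ M * f x ∂μ ≤
      (√M * b + 2 ^ Module.finrank ℝ E * L) * ∫ x in K, (1 - q x) ^ M ∂μ := by
  have hpow : ContinuousOn (fun x => (1 - q x) ^ M) K := (continuousOn_const.sub hq).pow M
  have hsqrt : ContinuousOn (fun x => √(q x) * (1 - q x) ^ M) K := hq.sqrt.mul hpow
  have hmono : ∫ x in K, (1 - q x) ^ M * f x ∂μ ≤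
      ∫ x in K, (b * (1 - q x) ^ M + L * (√(q x) * (1 - q x) ^ M)) ∂μ := by
    refine setIntegral_mono_on ((hpow.mul hf).integrableOn_compact hK)
      (((continuousOn_const.mul hpow).add (continuousOn_const.mul hsqrt)).integrableOn_compact hK)
      hK.measurableSet fun x hx => ?_
    calc (1 - q x) ^ M * f x
        ≤ (1 - q x) ^ M * (b + L * √(q x)) :=
          mul_le_mul_of_nonneg_left (hfq x hx) (pow_nonneg (sub_nonneg.2 (hq₁ x hx)) M)
      _ = b * (1 - q x) ^ M + L * (√(q x) * (1 - q x) ^ M) := by ring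
  rw [integral_add ((hpow.integrableOn_compact hK).const_mul b)
    ((hsqrt.integrableOn_compact hK).const_mul L), integral_const_mul, integral_const_mul] at hmono
  have hconc := sqrt_mul_setIntegral_sqrt_mul_one_sub_pow_le (μ := μ) hK hstar hq hq₀ hq₁ hhalf M
  linarith [mul_le_mul_of_nonneg_left hmono (Real.sqrt_nonneg M),
    mul_le_mul_of_nonneg_left hconc hL]

end Homothety

lemma le_setIntegral_mul_of_setIntegral_eq_one {X : Type*} [MeasurableSpace X] {μ : Measure X}
    {K : Set X} (hK : MeasurableSet K) {h f : X → ℝ} {b : ℝ} (hh : ∀ x ∈ K, 0 ≤ h x)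
    (hone : ∫ x in K, h x ∂μ = 1) (hhf : IntegrableOn (fun x => h x * f x) K μ)
    (hb : ∀ x ∈ K, b ≤ f x) : b ≤ ∫ x in K, h x * f x ∂μ := by
  have hint : IntegrableOn h K μ :=
    Integrable.of_integral_ne_zero (hone.trans_ne one_ne_zero)
  calc b = ∫ x in K, h x * b ∂μ := by rw [integral_mul_const, hone, one_mul]
    _ ≤ ∫ x in K, h x * f x ∂μ := setIntegral_mono_on (hint.mul_const b) hhf hK
        fun x hx => mul_le_mul_of_nonneg_left (hb x hx) (hh x hx)

lemma lasserreBound_le_div {n : ℕ} {f : (Fin n → ℝ) → ℝ} {K : Set (Fin n → ℝ)} (hK : IsCompact K)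
    (hf : ContinuousOn f K) {r : ℕ} {g : MvPolynomial (Fin n) ℝ} (hdeg : g.totalDegree ≤ r)
    (hg : 0 < ∫ x in K, MvPolynomial.eval x g ^ 2) :
    lasserreBound n f K r ≤
      (∫ x in K, MvPolynomial.eval x g ^ 2 * f x) / ∫ x in K, MvPolynomial.eval x g ^ 2 := by
  set I := ∫ x in K, MvPolynomial.eval x g ^ 2
  obtain ⟨b, hb⟩ := hK.bddBelow_image hf
  refine csInf_le ⟨b, ?_⟩ ⟨1, fun _ => MvPolynomial.C (√I)⁻¹ * g, fun _ => ?_, ?_, ?_⟩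
  · rintro _ ⟨m, p, -, hone, rfl⟩
    refine le_setIntegral_mul_of_setIntegral_eq_one hK.measurableSet (fun x _ => ?_) hone
      (((MvPolynomial.continuous_eval _).continuousOn.mul hf).integrableOn_compact hK)
      fun x hx => hb (Set.mem_image_of_mem f hx)
    rw [map_sum]
    exact Finset.sum_nonneg fun i _ => by rw [map_pow]; positivity
  · rw [← MvPolynomial.smul_eq_C_mul]
    exact (MvPolynomial.totalDegree_smul_le _ _).trans hdeg
  · simp [mul_pow, Real.sq_sqrt hg.le, integral_const_mul, I, inv_mul_cancel₀ hg.ne']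
  · simp [mul_pow, Real.sq_sqrt hg.le, integral_const_mul, mul_assoc, div_eq_inv_mul]

section Paraboloid

variable {σ : Type*} [Fintype σ]

/-- The squared Euclidean distance between `a` and `x`; the metric that `σ → ℝ` carries in Mathlib
comes from the sup norm, whose square is not a polynomial. -/
def euclideanSqDist (a x : σ → ℝ) : ℝ := ∑ i, (x i - a i) ^ 2

lemma euclideanSqDist_nonneg (a x : σ → ℝ) : 0 ≤ euclideanSqDist a x :=
  Finset.sum_nonneg fun _ _ => sq_nonneg _

lemma continuous_euclideanSqDist (a : σ → ℝ) : Continuous (euclideanSqDist a) := by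
  unfold euclideanSqDist
  fun_prop

lemma euclideanSqDist_homothety (a x : σ → ℝ) (s : ℝ) :
    euclideanSqDist a (a + s • (x - a)) = s ^ 2 * euclideanSqDist a x := by
  simp [euclideanSqDist, mul_pow, Finset.mul_sum]

lemma dist_le_sqrt_euclideanSqDist (a x : σ → ℝ) : dist x a ≤ √(euclideanSqDist a x) := by
  refine (dist_pi_le_iff (Real.sqrt_nonneg _)).2 fun i => Real.abs_le_sqrt ?_
  exact Finset.single_le_sum (f := fun i => (x i - a i) ^ 2) (fun _ _ => sq_nonneg _)
    (Finset.mem_univ i)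

/-- The polynomial `1 - c |x - a|²`, whose powers serve as densities concentrated around `a`. -/
noncomputable def paraboloid (a : σ → ℝ) (c : ℝ) : MvPolynomial σ ℝ :=
  1 - MvPolynomial.C c * ∑ i, (MvPolynomial.X i - MvPolynomial.C (a i)) ^ 2

lemma eval_paraboloid (a : σ → ℝ) (c : ℝ) (x : σ → ℝ) :
    MvPolynomial.eval x (paraboloid a c) = 1 - c * euclideanSqDist a x := by
  simp [paraboloid, euclideanSqDist]

lemma totalDegree_paraboloid_le (a : σ → ℝ) (c : ℝ) : (paraboloid a c).totalDegree ≤ 2 := by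
  have hlinear (i : σ) :
      (MvPolynomial.X i - MvPolynomial.C (a i) : MvPolynomial σ ℝ).totalDegree ≤ 1 :=
    (MvPolynomial.totalDegree_sub_C_le _ _).trans (MvPolynomial.totalDegree_X i).le
  refine (MvPolynomial.totalDegree_sub _ _).trans (max_le (by simp) ?_)
  rw [← MvPolynomial.smul_eq_C_mul]
  refine (MvPolynomial.totalDegree_smul_le _ _).trans
    (MvPolynomial.totalDegree_finsetSum_le fun i _ => ?_)
  exact (MvPolynomial.totalDegree_pow _ 2).trans (Nat.mul_le_mul_left 2 (hlinear i))

end Paraboloid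

lemma exists_lipschitzOnWith_eval {σ : Type*} [Fintype σ] (p : MvPolynomial σ ℝ)
    {K : Set (σ → ℝ)} (hK : IsCompact K) :
    ∃ L, LipschitzOnWith L (fun x => MvPolynomial.eval x p) K := by
  have hp : ContDiff ℝ 1 fun x : σ → ℝ => MvPolynomial.eval x p :=
    (AnalyticOnNhd.eval_mvPolynomial p).contDiff
  exact hp.locallyLipschitz.locallyLipschitzOn.exists_lipschitzOnWith_of_compact hK

section Bound

variable {n : ℕ} {f : (Fin n → ℝ) → ℝ} {K : Set (Fin n → ℝ)} {a : Fin n → ℝ}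

lemma lasserreBound_le_of_le_add_sqrt (hK : IsCompact K) (hvol : volume K ≠ 0)
    (hstar : StarConvex ℝ a K) (hf : ContinuousOn f K) {b c L : ℝ} (hc : 0 ≤ c) (hL : 0 ≤ L)
    (hcK : ∀ x ∈ K, c * euclideanSqDist a x ≤ 1 / 2)
    (hfb : ∀ x ∈ K, f x ≤ b + L * √(c * euclideanSqDist a x)) {m r : ℕ} (hm : 0 < m)
    (hmr : 2 * m ≤ r) :
    lasserreBound n f K r ≤ b + 2 ^ n * L / √(2 * m : ℕ) := by
  set q : (Fin n → ℝ) → ℝ := fun x => c * euclideanSqDist a x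
  have hq : Continuous q := continuous_const.mul (continuous_euclideanSqDist a)
  have eval_sq (x) : MvPolynomial.eval x (paraboloid a c ^ m) ^ 2 = (1 - q x) ^ (2 * m) := by
    rw [map_pow, eval_paraboloid, ← pow_mul, mul_comm m 2]
  have hdeg : (paraboloid a c ^ m).totalDegree ≤ r :=
    (MvPolynomial.totalDegree_pow _ m).trans
      ((Nat.mul_le_mul_left m (totalDegree_paraboloid_le a c)).trans (by omega))
  have hmass : 0 < ∫ x in K, (1 - q x) ^ (2 * m) := by
    rw [setIntegral_pos_iff_support_of_nonneg_ae
      (.of_forall fun x => (even_two_mul m).pow_nonneg (1 - q x))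
      (((continuous_const.sub hq).pow _).continuousOn.integrableOn_compact hK)]
    have hsupp : K ⊆ Function.support fun x => (1 - q x) ^ (2 * m) := fun x hx =>
      pow_ne_zero _ (by linarith [hcK x hx])
    rwa [Set.inter_eq_right.2 hsupp, pos_iff_ne_zero]
  have hbound := lasserreBound_le_div hK hf hdeg (by simpa only [eval_sq] using hmass)
  have hconc := sqrt_mul_setIntegral_one_sub_pow_mul_le (μ := volume) hK hstar hq.continuousOn
    (fun x _ => mul_nonneg hc (euclideanSqDist_nonneg a x))
    (fun x hx => (hcK x hx).trans one_half_lt_one.le)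
    (fun x _ => by simp only [q, euclideanSqDist_homothety]; ring) hf hL hfb (2 * m)
  rw [Module.finrank_fin_fun] at hconc
  have hsqrt : 0 < √(2 * m : ℕ) := Real.sqrt_pos.2 (by positivity)
  simp only [eval_sq] at hbound
  calc lasserreBound n f K r
      ≤ (∫ x in K, (1 - q x) ^ (2 * m) * f x) / ∫ x in K, (1 - q x) ^ (2 * m) := hbound
    _ ≤ (√(2 * m : ℕ) * b + 2 ^ n * L) / √(2 * m : ℕ) := by
      rw [div_le_div_iff₀ hmass hsqrt]
      linarith
    _ = b + 2 ^ n * L / √(2 * m : ℕ) := by field_simp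

lemma lasserreBound_sub_le {L : NNReal} (hK : IsCompact K) (hvol : volume K ≠ 0)
    (hstar : StarConvex ℝ a K) (hf : ContinuousOn f K)
    (hcalm : ∀ x ∈ K, f x ≤ f a + L * dist x a) {R : ℝ} (hR : 0 < R)
    (hKR : ∀ x ∈ K, euclideanSqDist a x ≤ R ^ 2) {r : ℕ} (hr : 2 ≤ r) :
    lasserreBound n f K r - f a ≤ 2 ^ (n + 1) * L * R / √r := by
  set c : ℝ := (2 * R ^ 2)⁻¹ with hc
  have hcK : ∀ x ∈ K, c * euclideanSqDist a x ≤ 1 / 2 := fun x hx => by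
    calc c * euclideanSqDist a x ≤ c * R ^ 2 := mul_le_mul_of_nonneg_left (hKR x hx) (by positivity)
      _ = 1 / 2 := by rw [hc]; field_simp
  have rescale (x) : √(euclideanSqDist a x) = √2 * R * √(c * euclideanSqDist a x) := by
    rw [← Real.sqrt_sq hR.le, ← Real.sqrt_mul zero_le_two, ← Real.sqrt_mul (by positivity),
      hc, mul_inv_cancel_left₀ (by positivity)]
  have hfa : ∀ x ∈ K, f x ≤ f a + L * (√2 * R) * √(c * euclideanSqDist a x) := fun x hx => by
    calc f x ≤ f a + L * dist x a := hcalm x hx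
      _ ≤ f a + L * √(euclideanSqDist a x) := by grw [dist_le_sqrt_euclideanSqDist a x]
      _ = f a + L * (√2 * R) * √(c * euclideanSqDist a x) := by rw [rescale, mul_assoc (L : ℝ)]
  have hbound := lasserreBound_le_of_le_add_sqrt (m := r / 2) hK hvol hstar hf (by positivity)
    (by positivity) hcK hfa (by omega) (Nat.mul_div_le r 2)
  have hsqrt : √r ≤ √2 * √(2 * (r / 2) : ℕ) := by
    rw [← Real.sqrt_mul zero_le_two]
    exact Real.sqrt_le_sqrt (by exact_mod_cast (by omega : r ≤ 2 * (2 * (r / 2))))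
  have hr₀ : 0 < √(r : ℝ) := Real.sqrt_pos.2 (by positivity)
  calc lasserreBound n f K r - f a
      ≤ 2 ^ n * (L * (√2 * R)) / √(2 * (r / 2) : ℕ) := sub_le_iff_le_add'.2 hbound
    _ = 2 ^ (n + 1) * L * R / (√2 * √(2 * (r / 2) : ℕ)) := by
      field_simp
      rw [Real.sq_sqrt zero_le_two]
      ring
    _ ≤ 2 ^ (n + 1) * L * R / √r := div_le_div_of_nonneg_left (by positivity) hr₀ hsqrt

theorem stmt0_general {L : NNReal} (hK : IsCompact K) (hvol : volume K ≠ 0) (ha : a ∈ K)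
    (hmin : IsMinOn f K a) (hstar : StarConvex ℝ a K) (hf : ContinuousOn f K)
    (hcalm : ∀ x ∈ K, f x ≤ f a + L * dist x a) :
    ∃ C : ℝ, 0 < C ∧ ∀ r : ℕ, 2 ≤ r → lasserreBound n f K r - sInf (f '' K) ≤ C / √r := by
  have hinf : sInf (f '' K) = f a :=
    IsLeast.csInf_eq ⟨Set.mem_image_of_mem f ha, Set.forall_mem_image.2 hmin⟩
  obtain ⟨B, hB⟩ := hK.bddAbove_image (continuous_euclideanSqDist a).continuousOn
  have hKR : ∀ x ∈ K, euclideanSqDist a x ≤ (|B| + 1) ^ 2 := fun x hx => by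
    nlinarith [hB (Set.mem_image_of_mem _ hx), le_abs_self B, abs_nonneg B]
  refine ⟨2 ^ (n + 1) * L * (|B| + 1) + 1, by positivity, fun r hr => ?_⟩
  calc lasserreBound n f K r - sInf (f '' K)
      ≤ 2 ^ (n + 1) * L * (|B| + 1) / √r := by
        rw [hinf]
        exact lasserreBound_sub_le hK hvol hstar hf hcalm (by positivity) hKR hr
    _ ≤ (2 ^ (n + 1) * L * (|B| + 1) + 1) / √r :=
        div_le_div_of_nonneg_right (le_add_of_nonneg_right zero_le_one) (Real.sqrt_nonneg _)

end Bound

theorem stmt0 (n : ℕ) (p : MvPolynomial (Fin n) ℝ) (f : (Fin n → ℝ) → ℝ)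
    (hf : f = fun x => MvPolynomial.eval x p)
    (K : Set (Fin n → ℝ)) (hKcomp : IsCompact K) (hKconv : Convex ℝ K)
    (hKint : (interior K).Nonempty) :
    ∃ C : ℝ, 0 < C ∧ ∃ rK : ℕ, ∀ r : ℕ, rK ≤ r →
      lasserreBound n f K r - sInf (f '' K) ≤ C / Real.sqrt r := by
  obtain ⟨L, hL⟩ := hf ▸ exists_lipschitzOnWith_eval p hKcomp
  obtain ⟨a, ha, hmin⟩ := hKcomp.exists_isMinOn (hKint.mono interior_subset) hL.continuousOn
  have hvol : volume K ≠ 0 := (Measure.measure_pos_of_nonempty_interior volume hKint).ne'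
  obtain ⟨C, hC, hbound⟩ := stmt0_general hKcomp hvol ha hmin (hKconv.starConvex ha)
    hL.continuousOn fun x hx => hL.le_add_mul hx ha
  exact ⟨C, hC, 2, hbound⟩
end

section
/- Let c ∈ ℝⁿ with ‖c‖₂ = 1, let f(x) = cᵀx, and let K ⊆ ℝⁿ be a convex body. Then for every t > 0, E_t[f] − min_{x∈K} f(x) ≤ n·t. -/
open MeasureTheory Real

/-- The Boltzmann expectation `E_t[f] = (∫_K f e^{-f/t}) / (∫_K e^{-f/t})`. -/
noncomputable def boltzmannExp (n : ℕ) (f : (Fin n → ℝ) → ℝ) (K : Set (Fin n → ℝ)) (t : ℝ) : ℝ :=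
  (∫ x in K, f x * Real.exp (-f x / t)) / (∫ x in K, Real.exp (-f x / t))

/-! Let `V` be convex on `K` and `x₀ ∈ K`. For `0 < s < 1` the homothety `x ↦ x₀ + s (x - x₀)`
shrinks `K` into itself and scales volume by `s ^ d`, so `∫_K e^{-V}` dominates `s ^ d` times
`∫_K e^{-V(x₀ + s (x - x₀))} dx`. By convexity and `1 + r ≤ e ^ r` the latter is at least
`∫_K (1 + (1 - s) (V - V x₀)) e^{-V}`. Equality holds at `s = 1`, and comparing derivatives there
gives `∫_K (V - V x₀) e^{-V} ≤ d ∫_K e^{-V}`. Apply this to `V = f / t`, for every `x₀ ∈ K`. -/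

open Set Filter Topology Module AffineMap

section Homothety

theorem mapsTo_homothety_of_starConvex {E : Type*} [AddCommGroup E] [Module ℝ E] {K : Set E}
    {x₀ : E} (hK : StarConvex ℝ x₀ K) {s : ℝ} (hs : s ∈ Icc 0 1) :
    MapsTo (homothety x₀ s) K K := fun x hx => by
  simpa only [homothety_apply, vsub_eq_sub, vadd_eq_add, add_comm] using
    hK.add_smul_sub_mem hx hs.1 hs.2

variable {E : Type*} [NormedAddCommGroup E] [NormedSpace ℝ E] [MeasurableSpace E] [BorelSpace E]

theorem measurableEmbedding_homothety (x₀ : E) {s : ℝ} (hs : s ≠ 0) :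
    MeasurableEmbedding (homothety x₀ s) :=
  (measurableEmbedding_addRight x₀).comp
    ((measurableEmbedding_const_smul₀ hs).comp (MeasurableEquiv.subRight x₀).measurableEmbedding)

variable [FiniteDimensional ℝ E] {μ : Measure E} [μ.IsAddHaarMeasure]

theorem map_homothety_addHaar (x₀ : E) {s : ℝ} (hs : s ≠ 0) :
    μ.map (homothety x₀ s) = ENNReal.ofReal |(s ^ finrank ℝ E)⁻¹| • μ := by
  have hcomp : ⇑(homothety x₀ s) = (· + x₀) ∘ (s • ·) ∘ (· - x₀) := rfl
  rw [hcomp, ← Measure.map_map (by fun_prop) (by fun_prop),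
    ← Measure.map_map (by fun_prop) (by fun_prop), map_sub_right_eq_self,
    Measure.map_addHaar_smul μ hs, Measure.map_smul, map_add_right_eq_self]

variable {F : Type*} [NormedAddCommGroup F]

theorem setIntegral_preimage_homothety [NormedSpace ℝ F] (h : E → F) (K : Set E) (x₀ : E) {s : ℝ}
    (hs : s ≠ 0) :
    ∫ x in homothety x₀ s ⁻¹' K, h (homothety x₀ s x) ∂μ =
      |(s ^ finrank ℝ E)⁻¹| • ∫ x in K, h x ∂μ := by
  rw [← (measurableEmbedding_homothety x₀ hs).setIntegral_map, map_homothety_addHaar x₀ hs,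
    Measure.restrict_smul, integral_smul_measure, ENNReal.toReal_ofReal (abs_nonneg _)]

theorem integrableOn_preimage_homothety {h : E → F} {K : Set E} (hh : IntegrableOn h K μ) (x₀ : E)
    {s : ℝ} (hs : s ≠ 0) : IntegrableOn (h ∘ homothety x₀ s) (homothety x₀ s ⁻¹' K) μ := by
  rw [← (measurableEmbedding_homothety x₀ hs).integrableOn_map_iff, map_homothety_addHaar x₀ hs,
    IntegrableOn, Measure.restrict_smul]
  exact hh.smul_measure ENNReal.ofReal_ne_top

variable {K : Set E} {x₀ : E} {s : ℝ}

theorem integrableOn_comp_homothety {h : E → F} (hK : StarConvex ℝ x₀ K) (hh : IntegrableOn h K μ)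
    (hs : s ∈ Ioc 0 1) : IntegrableOn (h ∘ homothety x₀ s) K μ :=
  (integrableOn_preimage_homothety hh x₀ hs.1.ne').mono_set
    (mapsTo_homothety_of_starConvex hK (Ioc_subset_Icc_self hs))

theorem pow_finrank_mul_setIntegral_comp_homothety_le {h : E → ℝ} (hK : StarConvex ℝ x₀ K)
    (hh : IntegrableOn h K μ) (h_nonneg : 0 ≤ h) (hs : s ∈ Ioc 0 1) :
    s ^ finrank ℝ E * ∫ x in K, h (homothety x₀ s x) ∂μ ≤ ∫ x in K, h x ∂μ := by
  have hs_pow : 0 < s ^ finrank ℝ E := pow_pos hs.1 _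
  have hsub : K ⊆ homothety x₀ s ⁻¹' K :=
    mapsTo_homothety_of_starConvex hK (Ioc_subset_Icc_self hs)
  calc s ^ finrank ℝ E * ∫ x in K, h (homothety x₀ s x) ∂μ
      ≤ s ^ finrank ℝ E * ∫ x in homothety x₀ s ⁻¹' K, h (homothety x₀ s x) ∂μ := by
        gcongr
        · exact .of_forall fun x => h_nonneg (homothety x₀ s x)
        · exact integrableOn_preimage_homothety hh x₀ hs.1.ne'
    _ = ∫ x in K, h x ∂μ := by
        rw [setIntegral_preimage_homothety h K x₀ hs.1.ne', abs_of_pos (inv_pos.2 hs_pow),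
          smul_eq_mul, mul_inv_cancel_left₀ hs_pow.ne']

end Homothety

theorem le_natCast_mul_of_forall_pow_mul_le {n : ℕ} {a b : ℝ}
    (h : ∀ s ∈ Ioo (0 : ℝ) 1, s ^ n * (a + (1 - s) * b) ≤ a) : b ≤ n * a := by
  let φ : ℝ → ℝ := fun s => s ^ n * (a + (1 - s) * b)
  have hφ : HasDerivAt φ (n * a - b) 1 := by
    refine ((hasDerivAt_pow n (1 : ℝ)).mul
      ((((hasDerivAt_id (1 : ℝ)).const_sub 1).mul_const b).const_add a)).congr_deriv ?_
    simp only [one_pow, id_eq]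
    ring
  have hslope : Tendsto (slope φ 1) (𝓝[<] 1) (𝓝 (n * a - b)) :=
    (hasDerivWithinAt_iff_tendsto_slope' self_notMem_Iio).1 hφ.hasDerivWithinAt
  have hslope_nonneg : ∀ᶠ s in 𝓝[<] 1, 0 ≤ slope φ 1 s := by
    filter_upwards [Ioo_mem_nhdsLT (zero_lt_one' ℝ)] with s hs
    have hφs : φ s ≤ φ 1 := (h s hs).trans_eq (by simp [φ])
    rw [slope_def_field]
    exact div_nonneg_of_nonpos (sub_nonpos.2 hφs) (sub_nonpos.2 hs.2.le)
  exact sub_nonneg.1 (ge_of_tendsto hslope hslope_nonneg)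

section Convex

theorem exp_neg_mul_le_exp_neg_homothety {E : Type*} [AddCommGroup E] [Module ℝ E] {K : Set E}
    {V : E → ℝ} (hV : ConvexOn ℝ K V) {x₀ x : E} (hx₀ : x₀ ∈ K) (hx : x ∈ K) {s : ℝ}
    (hs : s ∈ Icc 0 1) :
    exp (-V x) * (1 + (1 - s) * (V x - V x₀)) ≤ exp (-V (homothety x₀ s x)) := by
  have hconv : V (homothety x₀ s x) ≤ (1 - s) * V x₀ + s * V x := by
    rw [homothety_eq_lineMap, lineMap_apply_module]
    exact hV.2 hx₀ hx (sub_nonneg.2 hs.2) hs.1 (sub_add_cancel 1 s)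
  calc exp (-V x) * (1 + (1 - s) * (V x - V x₀))
      ≤ exp (-V x) * exp ((1 - s) * (V x - V x₀)) := by
        gcongr
        rw [add_comm]
        exact add_one_le_exp _
    _ = exp (-((1 - s) * V x₀ + s * V x)) := by
        rw [← exp_add]
        ring_nf
    _ ≤ exp (-V (homothety x₀ s x)) := by gcongr

variable {E : Type*} [NormedAddCommGroup E] [NormedSpace ℝ E] [MeasurableSpace E] [BorelSpace E]
  [FiniteDimensional ℝ E] {μ : Measure E} [μ.IsAddHaarMeasure] {K : Set E} {V : E → ℝ} {x₀ : E}

theorem setIntegral_mul_exp_neg_sub_le (hV : ConvexOn ℝ K V) (hx₀ : x₀ ∈ K)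
    (hexp : IntegrableOn (fun x => exp (-V x)) K μ)
    (hVexp : IntegrableOn (fun x => V x * exp (-V x)) K μ) :
    ∫ x in K, V x * exp (-V x) ∂μ - V x₀ * ∫ x in K, exp (-V x) ∂μ ≤
      finrank ℝ E * ∫ x in K, exp (-V x) ∂μ := by
  refine le_natCast_mul_of_forall_pow_mul_le fun s hs => ?_
  have hs' : s ∈ Ioc (0 : ℝ) 1 := Ioo_subset_Ioc_self hs
  have hstar : StarConvex ℝ x₀ K := hV.1.starConvex hx₀
  have hdiff : IntegrableOn (fun x => V x * exp (-V x) - V x₀ * exp (-V x)) K μ :=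
    hVexp.sub (hexp.const_mul _)
  have hsum : IntegrableOn
      (fun x => exp (-V x) + (1 - s) * (V x * exp (-V x) - V x₀ * exp (-V x))) K μ :=
    hexp.add (hdiff.const_mul _)
  calc s ^ finrank ℝ E * (∫ x in K, exp (-V x) ∂μ +
        (1 - s) * (∫ x in K, V x * exp (-V x) ∂μ - V x₀ * ∫ x in K, exp (-V x) ∂μ))
      = s ^ finrank ℝ E *
          ∫ x in K, exp (-V x) + (1 - s) * (V x * exp (-V x) - V x₀ * exp (-V x)) ∂μ := by
        rw [integral_add hexp (hdiff.const_mul _), integral_const_mul,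
          integral_sub hVexp (hexp.const_mul _), integral_const_mul]
    _ ≤ s ^ finrank ℝ E * ∫ x in K, exp (-V (homothety x₀ s x)) ∂μ := by
        refine mul_le_mul_of_nonneg_left ?_ (pow_nonneg hs.1.le _)
        refine setIntegral_mono_on₀ hsum (integrableOn_comp_homothety hstar hexp hs')
          (hV.1.nullMeasurableSet μ) fun x hx => ?_
        linarith [exp_neg_mul_le_exp_neg_homothety hV hx₀ hx (Ioo_subset_Icc_self hs)]
    _ ≤ ∫ x in K, exp (-V x) ∂μ :=
        pow_finrank_mul_setIntegral_comp_homothety_le hstar hexp (fun x => (exp_pos _).le) hs'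

theorem setIntegral_mul_exp_neg_div_setIntegral_exp_neg_le (hV : ConvexOn ℝ K V)
    (hx₀ : x₀ ∈ K) (hK : μ K ≠ 0) (hexp : IntegrableOn (fun x => exp (-V x)) K μ)
    (hVexp : IntegrableOn (fun x => V x * exp (-V x)) K μ) :
    (∫ x in K, V x * exp (-V x) ∂μ) / ∫ x in K, exp (-V x) ∂μ ≤ finrank ℝ E + V x₀ := by
  have : NeZero (μ.restrict K) := ⟨mt Measure.restrict_eq_zero.1 hK⟩
  rw [div_le_iff₀ (integral_exp_pos hexp), add_mul, ← sub_le_iff_le_add]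
  exact setIntegral_mul_exp_neg_sub_le hV hx₀ hexp hVexp

theorem stmt1_general {f : E → ℝ} (hf : ConvexOn ℝ K f) (hK : μ K ≠ 0) {t : ℝ} (ht : 0 < t)
    (hexp : IntegrableOn (fun x => exp (-f x / t)) K μ)
    (hfexp : IntegrableOn (fun x => f x * exp (-f x / t)) K μ) :
    (∫ x in K, f x * exp (-f x / t) ∂μ) / (∫ x in K, exp (-f x / t) ∂μ) - sInf (f '' K) ≤
      finrank ℝ E * t := by
  have hV : ConvexOn ℝ K fun x => t⁻¹ * f x := hf.smul (inv_nonneg.2 ht.le)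
  have hexp_eq (x : E) : exp (-f x / t) = exp (-(t⁻¹ * f x)) := by ring_nf
  simp only [hexp_eq] at hexp hfexp ⊢
  rw [sub_le_comm]
  refine le_csInf ((nonempty_of_measure_ne_zero hK).image f) (forall_mem_image.2 fun x₀ hx₀ => ?_)
  have hmean := setIntegral_mul_exp_neg_div_setIntegral_exp_neg_le hV hx₀ hK hexp
    (by simpa only [IntegrableOn, mul_assoc] using hfexp.const_mul t⁻¹)
  simp only [mul_assoc, integral_const_mul] at hmean
  rw [mul_div_assoc, inv_mul_le_iff₀ ht, mul_add, mul_inv_cancel_left₀ ht.ne'] at hmean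
  linarith

end Convex

theorem boltzmannExp_sub_sInf_le_of_isCompact {n : ℕ} {f : (Fin n → ℝ) → ℝ} {K : Set (Fin n → ℝ)}
    (hf : ConvexOn ℝ K f) (hf_cont : ContinuousOn f K) (hK : IsCompact K)
    (hKint : (interior K).Nonempty) {t : ℝ} (ht : 0 < t) :
    boltzmannExp n f K t - sInf (f '' K) ≤ n * t := by
  have hexp_cont : ContinuousOn (fun x => exp (-f x / t)) K := by fun_prop
  simpa only [boltzmannExp, finrank_fin_fun] using
    stmt1_general hf (Measure.measure_pos_of_nonempty_interior volume hKint).ne' ht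
      (hexp_cont.integrableOn_compact hK) ((hf_cont.mul hexp_cont).integrableOn_compact hK)

theorem stmt1 (n : ℕ) (c : Fin n → ℝ) (hc : Real.sqrt (∑ i, c i ^ 2) = 1)
    (f : (Fin n → ℝ) → ℝ) (hf : f = fun x => ∑ i, c i * x i)
    (K : Set (Fin n → ℝ)) (hKcomp : IsCompact K) (hKconv : Convex ℝ K)
    (hKint : (interior K).Nonempty)
    (t : ℝ) (ht : 0 < t) :
    boltzmannExp n f K t - sInf (f '' K) ≤ n * t := by
  subst hf
  exact boltzmannExp_sub_sInf_le_of_isCompact ((dotProductBilin ℝ ℝ c).convexOn hKconv)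
    (by fun_prop) hKcomp hKint ht
end

section
/- Let f : ℝⁿ → ℝ be continuous, let K ⊆ ℝⁿ be compact with positive Lebesgue measure, let t > 0, and set E := E_t[f]. Assume that ∫_K (e^{−f(x)/t} − e^{−E/t}) dx ≠ 0. Then, interpreting the inner integrals ∫_{f(x)}^{E} as signed (oriented) integrals, one has (∫_K ∫_{f(x)}^{E} s·e^{−s/t} ds dx) / (∫_K ∫_{f(x)}^{E} e^{−s/t} ds dx) = E + t. -/
open MeasureTheory Real

/-!
Integration by parts gives, for any `a` and `b`,
`∫ s in a..b, s * exp (-s / t)`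
`  = t * ((a - b) * exp (-a / t)) + (b + t) * ∫ s in a..b, exp (-s / t)`.
Take `a = f x` and `b = E` and integrate over `x`: the first term vanishes exactly when `E` is the
Boltzmann mean of `f`, and the numerator is then `E + t` times the denominator.
-/

section ExponentialIntegrals

variable {t : ℝ}

theorem hasDerivAt_neg_mul_exp_neg_div (ht : t ≠ 0) (s : ℝ) :
    HasDerivAt (fun s ↦ -t * exp (-s / t)) (exp (-s / t)) s := by
  have exponent : HasDerivAt (fun s ↦ -s / t) (-1 / t) s := (hasDerivAt_neg s).div_const t
  refine (exponent.exp.const_mul (-t)).congr_deriv ?_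
  field_simp

theorem intervalIntegrable_exp_neg_div (t a b : ℝ) :
    IntervalIntegrable (fun s ↦ exp (-s / t)) volume a b :=
  (by fun_prop : Continuous fun s ↦ exp (-s / t)).intervalIntegrable a b

theorem integral_exp_neg_div (ht : t ≠ 0) (a b : ℝ) :
    ∫ s in a..b, exp (-s / t) = t * (exp (-a / t) - exp (-b / t)) := by
  rw [intervalIntegral.integral_eq_sub_of_hasDerivAt
    (fun s _ ↦ hasDerivAt_neg_mul_exp_neg_div ht s) (intervalIntegrable_exp_neg_div t a b)]
  ring

theorem integral_id_mul_exp_neg_div (ht : t ≠ 0) (a b : ℝ) :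
    ∫ s in a..b, s * exp (-s / t) =
      t * ((a - b) * exp (-a / t)) + (b + t) * ∫ s in a..b, exp (-s / t) := by
  have by_parts := intervalIntegral.integral_mul_deriv_eq_deriv_mul
    (fun s _ ↦ hasDerivAt_id s) (fun s _ ↦ hasDerivAt_neg_mul_exp_neg_div ht s)
    intervalIntegrable_const (intervalIntegrable_exp_neg_div t a b)
  simp only [id_eq, one_mul, intervalIntegral.integral_const_mul] at by_parts
  rw [by_parts, integral_exp_neg_div ht]
  ring

end ExponentialIntegrals

section BoltzmannMean

variable {α : Type*} [MeasurableSpace α] {μ : Measure α} {f : α → ℝ} {t E : ℝ}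

/-- The mean of `f` under the Boltzmann distribution at temperature `t` with energy `f`, for an
arbitrary reference measure `μ`; the case of Lebesgue measure restricted to `K` is `boltzmannExp`.
It takes a junk value when an integrand is not integrable or `μ = 0`. -/
noncomputable def boltzmannMean (μ : Measure α) (f : α → ℝ) (t : ℝ) : ℝ :=
  (∫ x, f x * exp (-f x / t) ∂μ) / ∫ x, exp (-f x / t) ∂μ

theorem integral_sub_boltzmannMean_mul_exp_eq_zero
    (hexp : Integrable (fun x ↦ exp (-f x / t)) μ)
    (hfexp : Integrable (fun x ↦ f x * exp (-f x / t)) μ) :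
    ∫ x, (f x - boltzmannMean μ f t) * exp (-f x / t) ∂μ = 0 := by
  rcases eq_zero_or_neZero μ with rfl | _
  · exact integral_zero_measure _
  · have partition_pos : 0 < ∫ x, exp (-f x / t) ∂μ := integral_exp_pos hexp
    simp only [sub_mul]
    rw [integral_sub hfexp (hexp.const_mul _), integral_const_mul, boltzmannMean,
      div_mul_cancel₀ _ partition_pos.ne', sub_self]

theorem integral_integral_id_mul_exp_neg_div (ht : t ≠ 0)
    (hexp : Integrable (fun x ↦ exp (-f x / t)) μ)
    (hfexp : Integrable (fun x ↦ f x * exp (-f x / t)) μ)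
    (hdiff : Integrable (fun x ↦ exp (-f x / t) - exp (-E / t)) μ) :
    ∫ x, (∫ s in (f x)..E, s * exp (-s / t)) ∂μ =
      t * ∫ x, (f x - E) * exp (-f x / t) ∂μ +
        (E + t) * ∫ x, (∫ s in (f x)..E, exp (-s / t)) ∂μ := by
  have int_sub : Integrable (fun x ↦ (f x - E) * exp (-f x / t)) μ := by
    simp only [sub_mul]
    exact hfexp.sub (hexp.const_mul E)
  have int_inner : Integrable (fun x ↦ ∫ s in (f x)..E, exp (-s / t)) μ := by
    simpa only [integral_exp_neg_div ht] using hdiff.const_mul t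
  simp only [integral_id_mul_exp_neg_div ht]
  rw [integral_add (int_sub.const_mul t) (int_inner.const_mul (E + t)), integral_const_mul,
    integral_const_mul]

theorem stmt3_general (ht : t ≠ 0)
    (hexp : Integrable (fun x ↦ exp (-f x / t)) μ)
    (hfexp : Integrable (fun x ↦ f x * exp (-f x / t)) μ)
    (hE : E = boltzmannMean μ f t)
    (hne : ∫ x, (exp (-f x / t) - exp (-E / t)) ∂μ ≠ 0) :
    (∫ x, (∫ s in (f x)..E, s * exp (-s / t)) ∂μ) /
        (∫ x, (∫ s in (f x)..E, exp (-s / t)) ∂μ) =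
      E + t := by
  have hdiff : Integrable (fun x ↦ exp (-f x / t) - exp (-E / t)) μ :=
    .of_integral_ne_zero hne
  have denominator_ne_zero : ∫ x, (∫ s in (f x)..E, exp (-s / t)) ∂μ ≠ 0 := by
    simpa only [integral_exp_neg_div ht, integral_const_mul] using mul_ne_zero ht hne
  have centered : ∫ x, (f x - E) * exp (-f x / t) ∂μ = 0 :=
    hE ▸ integral_sub_boltzmannMean_mul_exp_eq_zero hexp hfexp
  rw [integral_integral_id_mul_exp_neg_div ht hexp hfexp hdiff, centered, mul_zero, zero_add,
    mul_div_cancel_right₀ _ denominator_ne_zero]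

end BoltzmannMean

theorem stmt3 (n : ℕ) (f : (Fin n → ℝ) → ℝ) (hf : Continuous f)
    (K : Set (Fin n → ℝ)) (hKcomp : IsCompact K) (hKpos : 0 < volume K)
    (t : ℝ) (ht : 0 < t) (E : ℝ) (hE : E = boltzmannExp n f K t)
    (hne : (∫ x in K, (Real.exp (-f x / t) - Real.exp (-E / t))) ≠ 0) :
    (∫ x in K, ∫ s in (f x)..E, s * Real.exp (-s / t)) /
      (∫ x in K, ∫ s in (f x)..E, Real.exp (-s / t)) = E + t :=
  stmt3_general ht.ne'
    (ContinuousOn.integrableOn_compact hKcomp (by fun_prop))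
    (ContinuousOn.integrableOn_compact hKcomp (by fun_prop)) hE hne
end

section
/- Let f : ℝⁿ → ℝ be a polynomial of degree d ≥ 1, let K ⊆ ℝⁿ be compact with positive Lebesgue measure, assume f(x) ≥ 0 for all x ∈ K, and set f̂_max := max_{x∈K} |f(x)|. Then for every t > 0 and every integer r with r ≥ e·f̂_max/t one has f̲^(rd)_K ≤ E_t[f] + f̂_max/2^r. -/
open MeasureTheory Real

/-!
The truncated exponential `T x = ∑_{k ≤ 2r} x ^ k / k!` is a sum of squares of polynomials of
degree at most `r`: expanding `T x` as `1/(2r)!` times `∫₀^∞ (x + s)^r (x + s)^r e^{-s} ds`, the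
moment matrix `((i + j)!)` of `e^{-s} ds` factors as `∑ₖ (i! (i choose k)) (j! (j choose k))`.
Hence `T (-f/t)`, once normalised, is an admissible density of degree `2rd`. Taylor's theorem gives
`e^x ≤ T x ≤ (1 + 2⁻ʳ) e^x` for `-r/e ≤ x ≤ 0`, and replacing the Boltzmann weight by a weight
that is pinched in this way raises the mean of `f` by at most `2⁻ʳ max f`.
-/

section TruncatedExponential

open Finset
open scoped Nat Polynomial

theorem sum_range_choose_mul_sum_range_choose_mul {R : Type*} [CommSemiring R] (m n : ℕ)
    (g : ℕ → R) :
    ∑ i ∈ range (m + 1), (m.choose i : R) * ∑ j ∈ range (n + 1), (n.choose j : R) * g (i + j) =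
      ∑ k ∈ range (m + n + 1), ((m + n).choose k : R) * g k := by
  induction m generalizing g with
  | zero => simp
  | succ m ih =>
    have pascal (l : ℕ) (h : ℕ → R) :
        ∑ i ∈ range (l + 1 + 1), ((l + 1).choose i : R) * h i =
          ∑ i ∈ range (l + 1), (l.choose i : R) * h i +
            ∑ i ∈ range (l + 1), (l.choose i : R) * h (i + 1) :=
      sum_choose_succ_mul (fun i _ => h i) l
    simp only [pascal m, ih, Nat.add_right_comm m 1 n, pascal (m + n), ← ih fun k => g (k + 1),
      Nat.add_right_comm]

theorem choose_add_eq_sum_range (i j : ℕ) :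
    (i + j).choose i = ∑ k ∈ range (i + 1), i.choose k * j.choose k := by
  rw [Nat.add_choose_eq, Nat.sum_antidiagonal_eq_sum_range_succ fun a b => i.choose a * j.choose b,
    Nat.succ_eq_add_one, ← sum_range_reflect]
  refine sum_congr rfl fun k hk => ?_
  have hki : k ≤ i := mem_range_succ_iff.mp hk
  rw [Nat.add_sub_cancel, Nat.choose_symm hki, Nat.sub_sub_self hki]

theorem factorial_add_eq_sum_range {i r : ℕ} (hir : i ≤ r) (j : ℕ) :
    (i + j)! = ∑ k ∈ range (r + 1), (i ! * i.choose k) * (j ! * j.choose k) := by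
  have hzero : ∀ k ≥ i + 1, (i ! * i.choose k) * (j ! * j.choose k) = 0 := fun k hk => by
    rw [Nat.choose_eq_zero_of_lt hk, mul_zero, zero_mul]
  rw [eventually_constant_sum hzero (Nat.succ_le_succ hir),
    ← Nat.add_choose_mul_factorial_mul_factorial, ← Nat.choose_symm_add, choose_add_eq_sum_range,
    sum_mul, sum_mul]
  exact sum_congr rfl fun k _ => by ring

theorem sum_range_descFactorial_mul_pow_eq_sum_sq {R : Type*} [CommSemiring R] (r : ℕ) (x : R) :
    ∑ m ∈ range (2 * r + 1), ((2 * r).descFactorial m : R) * x ^ (2 * r - m) =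
      ∑ k ∈ range (r + 1),
        (∑ i ∈ range (r + 1), (r.descFactorial i * i.choose k : R) * x ^ (r - i)) ^ 2 := by
  have hmoment : ∀ i ∈ range (r + 1), ∀ j ∈ range (r + 1),
      (r.choose i : R) * (r.choose j * ((i + j)! * x ^ (2 * r - (i + j)))) =
        ∑ k ∈ range (r + 1), (r.descFactorial i * i.choose k : R) * x ^ (r - i) *
          ((r.descFactorial j * j.choose k : R) * x ^ (r - j)) := fun i hi j hj => by
    have hi : i ≤ r := mem_range_succ_iff.mp hi
    have hj : j ≤ r := mem_range_succ_iff.mp hj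
    rw [factorial_add_eq_sum_range hi, show 2 * r - (i + j) = (r - i) + (r - j) by lia, pow_add]
    simp only [Nat.cast_sum, Nat.cast_mul, sum_mul, mul_sum,
      Nat.descFactorial_eq_factorial_mul_choose]
    exact sum_congr rfl fun k _ => by ring
  calc ∑ m ∈ range (2 * r + 1), ((2 * r).descFactorial m : R) * x ^ (2 * r - m)
      = ∑ m ∈ range (r + r + 1), ((r + r).choose m : R) * (m ! * x ^ (2 * r - m)) := by
        rw [← two_mul]
        refine sum_congr rfl fun m _ => ?_
        rw [Nat.descFactorial_eq_factorial_mul_choose, Nat.cast_mul]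
        ring
    _ = ∑ i ∈ range (r + 1), ∑ j ∈ range (r + 1),
          (r.choose i : R) * (r.choose j * ((i + j)! * x ^ (2 * r - (i + j)))) := by
        simp only [← sum_range_choose_mul_sum_range_choose_mul, mul_sum]
    _ = ∑ i ∈ range (r + 1), ∑ j ∈ range (r + 1), ∑ k ∈ range (r + 1),
          (r.descFactorial i * i.choose k : R) * x ^ (r - i) *
            ((r.descFactorial j * j.choose k : R) * x ^ (r - j)) :=
        sum_congr rfl fun i hi => sum_congr rfl fun j hj => hmoment i hi j hj
    _ = _ := by
        simp only [sq, sum_mul_sum]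
        rw [sum_comm_cycle]

theorem sum_range_descFactorial_mul_pow {F : Type*} [Field F] [CharZero F] (n : ℕ) (x : F) :
    ∑ m ∈ range (n + 1), (n.descFactorial m : F) * x ^ (n - m) =
      n ! * ∑ k ∈ range (n + 1), x ^ k / k ! := by
  rw [← sum_range_reflect, mul_sum]
  refine sum_congr rfl fun k hk => ?_
  have hkn : k ≤ n := mem_range_succ_iff.mp hk
  have hfact : (k ! : F) ≠ 0 := mod_cast k.factorial_ne_zero
  rw [Nat.add_sub_cancel, ← Nat.factorial_mul_descFactorial (Nat.sub_le n k),
    Nat.sub_sub_self hkn, Nat.cast_mul]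
  field_simp

/-- The Taylor polynomial of degree `n` of `exp` at `0`, which replaces `exp` in the
Boltzmann weight to make it a polynomial. -/
noncomputable def truncExp (n : ℕ) (x : ℝ) : ℝ :=
  ∑ k ∈ range (n + 1), x ^ k / k !

@[fun_prop]
theorem continuous_truncExp (n : ℕ) : Continuous (truncExp n) := by
  unfold truncExp
  fun_prop

theorem exists_sum_sq_eval_eq_truncExp (r : ℕ) :
    ∃ q : Fin (r + 1) → ℝ[X], (∀ k, (q k).natDegree ≤ r) ∧
      ∀ x, ∑ k, (q k).eval x ^ 2 = truncExp (2 * r) x := by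
  refine ⟨fun k => Polynomial.C (√(2 * r)!)⁻¹ * ∑ i ∈ range (r + 1),
    Polynomial.C (r.descFactorial i * i.choose k : ℝ) * Polynomial.X ^ (r - i), fun k => ?_,
    fun x => ?_⟩
  · refine (Polynomial.natDegree_C_mul_le _ _).trans
      (Polynomial.natDegree_sum_le_of_forall_le _ _ fun i _ => ?_)
    exact (Polynomial.natDegree_C_mul_X_pow_le _ _).trans (Nat.sub_le r i)
  · have hfact : (0 : ℝ) < (2 * r)! := mod_cast Nat.factorial_pos _
    simp only [Polynomial.eval_mul, Polynomial.eval_C, Polynomial.eval_finsetSum,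
      Polynomial.eval_pow, Polynomial.eval_X, mul_pow, ← mul_sum]
    rw [Fin.sum_univ_eq_sum_range (fun k => (∑ i ∈ range (r + 1),
        (r.descFactorial i * i.choose k : ℝ) * x ^ (r - i)) ^ 2) (r + 1),
      ← sum_range_descFactorial_mul_pow_eq_sum_sq, sum_range_descFactorial_mul_pow, inv_pow,
      Real.sq_sqrt hfact.le, inv_mul_cancel_left₀ hfact.ne', truncExp]

theorem exists_exp_eq_truncExp_add (x : ℝ) (n : ℕ) :
    ∃ y ∈ Set.uIcc 0 x, exp x = truncExp n x + exp y * x ^ (n + 1) / (n + 1)! := by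
  rcases eq_or_ne 0 x with rfl | hx
  · exact ⟨0, by simp, by simp [truncExp, sum_range_succ']⟩
  obtain ⟨y, hy, h⟩ := taylor_mean_remainder_lagrange_iteratedDeriv (n := n) hx
    contDiff_exp.contDiffOn
  have htaylor : taylorWithinEval exp n (Set.uIcc 0 x) 0 x = truncExp n x := by
    rw [taylor_within_apply, truncExp]
    refine sum_congr rfl fun k _ => ?_
    rw [iteratedDerivWithin_eq_iteratedDeriv (uniqueDiffOn_uIcc hx) contDiff_exp.contDiffAt
      Set.left_mem_uIcc, iteratedDeriv_eq_iterate, iter_deriv_exp, exp_zero, smul_eq_mul]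
    ring
  rw [htaylor, iteratedDeriv_eq_iterate, iter_deriv_exp, sub_zero, sub_eq_iff_eq_add'] at h
  exact ⟨y, Set.Ioo_subset_Icc_self hy, h⟩

variable {x : ℝ} (r : ℕ)

theorem exp_le_truncExp_of_nonpos (hx : x ≤ 0) : exp x ≤ truncExp (2 * r) x := by
  obtain ⟨y, -, h⟩ := exists_exp_eq_truncExp_add x (2 * r)
  have hpow : x ^ (2 * r + 1) ≤ 0 := Odd.pow_nonpos ⟨r, rfl⟩ hx
  rw [h, add_le_iff_nonpos_right]
  exact div_nonpos_of_nonpos_of_nonneg (mul_nonpos_of_nonneg_of_nonpos (exp_nonneg y) hpow)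
    (Nat.cast_nonneg _)

theorem truncExp_le_exp_add_of_nonpos (hx : x ≤ 0) :
    truncExp (2 * r) x ≤ exp x + (-x) ^ (2 * r + 1) / (2 * r + 1)! := by
  obtain ⟨y, hy, h⟩ := exists_exp_eq_truncExp_add x (2 * r)
  have hexp : exp y ≤ 1 := by
    rw [Set.uIcc_of_ge hx] at hy
    exact exp_le_one_iff.mpr hy.2
  have hpow : 0 ≤ (-x) ^ (2 * r + 1) := pow_nonneg (neg_nonneg.mpr hx) _
  calc truncExp (2 * r) x
      = exp x + exp y * (-x) ^ (2 * r + 1) / (2 * r + 1)! := by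
        rw [h, Odd.neg_pow ⟨r, rfl⟩]; ring
    _ ≤ exp x + (-x) ^ (2 * r + 1) / (2 * r + 1)! := by
        gcongr
        exact mul_le_of_le_one_left hpow hexp

theorem pow_div_factorial_le_pow {s c : ℝ} {n : ℕ} (hs : 0 ≤ s) (hc : 0 ≤ c)
    (h : exp 1 * s ≤ c * n) : s ^ n / n ! ≤ c ^ n := by
  have hfact : (n : ℝ) ^ n ≤ exp 1 ^ n * n ! := by
    rw [← div_le_iff₀ (by positivity), ← exp_nat_mul, mul_one]
    exact pow_div_factorial_le_exp _ n.cast_nonneg n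
  have hpow : exp 1 ^ n * s ^ n ≤ c ^ n * n ^ n := by
    simpa only [mul_pow] using pow_le_pow_left₀ (by positivity) h n
  rw [div_le_iff₀ (by positivity)]
  refine le_of_mul_le_mul_left ?_ (pow_pos (exp_pos 1) n)
  calc exp 1 ^ n * s ^ n ≤ c ^ n * n ^ n := hpow
    _ ≤ c ^ n * (exp 1 ^ n * n !) := by gcongr
    _ = exp 1 ^ n * (c ^ n * n !) := by ring

theorem one_half_pow_le_exp (hr : exp 1 * (-x) ≤ r) : (1 / 2 : ℝ) ^ r ≤ exp x := by
  have hhalf : (r : ℝ) ≤ exp 1 * (r * (1 / 2)) := by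
    nlinarith [exp_one_gt_d9, r.cast_nonneg (α := ℝ)]
  have hx : -x ≤ r * (1 / 2) := le_of_mul_le_mul_left (hr.trans hhalf) (exp_pos 1)
  have hlog : r * (1 / 2) ≤ r * log 2 := by
    gcongr
    linarith [log_two_gt_d9]
  calc (1 / 2 : ℝ) ^ r = exp (r * -log 2) := by
        rw [exp_nat_mul, exp_neg, exp_log two_pos, one_div]
    _ ≤ exp x := exp_le_exp.mpr (by linarith)

theorem truncExp_le_one_add_mul_exp (hx : x ≤ 0) (hr : exp 1 * (-x) ≤ r) :
    truncExp (2 * r) x ≤ (1 + (1 / 2) ^ r) * exp x := by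
  have hrem : (-x) ^ (2 * r + 1) / (2 * r + 1)! ≤ (1 / 2) ^ (2 * r + 1) :=
    pow_div_factorial_le_pow (neg_nonneg.mpr hx) (by norm_num) (by push_cast; linarith)
  calc truncExp (2 * r) x
      ≤ exp x + (1 / 2) ^ (2 * r + 1) := (truncExp_le_exp_add_of_nonpos r hx).trans (by gcongr)
    _ ≤ exp x + (1 / 2) ^ r * (1 / 2) ^ r := by
        rw [← pow_add, ← two_mul, pow_succ]
        exact add_le_add_right (mul_le_of_le_one_right (by positivity) (by norm_num)) _
    _ ≤ exp x + (1 / 2) ^ r * exp x := by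
        gcongr
        exact one_half_pow_le_exp r hr
    _ = (1 + (1 / 2) ^ r) * exp x := by ring

end TruncatedExponential

section WeightedMean

variable {α : Type*} [MeasurableSpace α] {μ : Measure α} {f u w : α → ℝ} {ε M : ℝ}

theorem integral_mul_div_integral_le_add (hw : Integrable w μ) (hu : Integrable u μ)
    (hwf : Integrable (fun x => w x * f x) μ) (huf : Integrable (fun x => u x * f x) μ)
    (hw0 : 0 ≤ᵐ[μ] w) (hwu : w ≤ᵐ[μ] u) (huw : ∀ᵐ x ∂μ, u x ≤ (1 + ε) * w x)
    (hf0 : 0 ≤ᵐ[μ] f) (hfM : ∀ᵐ x ∂μ, f x ≤ M) (hpos : 0 < ∫ x, w x ∂μ) :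
    (∫ x, u x * f x ∂μ) / ∫ x, u x ∂μ ≤ (∫ x, w x * f x ∂μ) / (∫ x, w x ∂μ) + ε * M := by
  have hnum : ∫ x, u x * f x ∂μ ≤ ∫ x, w x * f x ∂μ + ε * M * ∫ x, w x ∂μ := by
    rw [← integral_const_mul, ← integral_add hwf (hw.const_mul _)]
    refine integral_mono_ae huf (hwf.add (hw.const_mul _)) ?_
    filter_upwards [hwu, huw, hf0, hfM] with x hwu huw hf0 hfM
    have hεw : 0 ≤ ε * w x := by linarith
    calc u x * f x ≤ (1 + ε) * w x * f x := mul_le_mul_of_nonneg_right huw hf0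
      _ = w x * f x + ε * w x * f x := by ring
      _ ≤ w x * f x + ε * w x * M := by gcongr
      _ = w x * f x + ε * M * w x := by ring
  have hnum0 : 0 ≤ ∫ x, u x * f x ∂μ := integral_nonneg_of_ae <| by
    filter_upwards [hw0, hwu, hf0] with x hw0 hwu hf0 using mul_nonneg (hw0.trans hwu) hf0
  calc (∫ x, u x * f x ∂μ) / ∫ x, u x ∂μ
      ≤ (∫ x, u x * f x ∂μ) / ∫ x, w x ∂μ :=
        div_le_div_of_nonneg_left hnum0 hpos (integral_mono_ae hw hu hwu)
    _ ≤ (∫ x, w x * f x ∂μ + ε * M * ∫ x, w x ∂μ) / ∫ x, w x ∂μ := by gcongr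
    _ = (∫ x, w x * f x ∂μ) / (∫ x, w x ∂μ) + ε * M := by field_simp

end WeightedMean

section LasserreBound

open scoped Polynomial

theorem totalDegree_aeval_le {R σ : Type*} [CommSemiring R] (u : MvPolynomial σ R) (q : R[X]) :
    (Polynomial.aeval u q).totalDegree ≤ q.natDegree * u.totalDegree := by
  rw [Polynomial.aeval_eq_sum_range]
  refine MvPolynomial.totalDegree_finsetSum_le fun i hi => ?_
  calc (q.coeff i • u ^ i).totalDegree
      ≤ (u ^ i).totalDegree := MvPolynomial.totalDegree_smul_le _ _
    _ ≤ i * u.totalDegree := MvPolynomial.totalDegree_pow u i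
    _ ≤ q.natDegree * u.totalDegree := by
        gcongr
        exact Finset.mem_range_succ_iff.mp hi

variable {n m r d : ℕ} {f : (Fin n → ℝ) → ℝ} {K : Set (Fin n → ℝ)}

theorem lasserreBound_le (hK : MeasurableSet K) (hf : ∀ x ∈ K, 0 ≤ f x)
    (q : Fin m → MvPolynomial (Fin n) ℝ) (hq : ∀ k, (q k).totalDegree ≤ r)
    (hone : ∫ x in K, MvPolynomial.eval x (∑ k, q k ^ 2) = 1) :
    lasserreBound n f K r ≤ ∫ x in K, MvPolynomial.eval x (∑ k, q k ^ 2) * f x := by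
  refine csInf_le ⟨0, ?_⟩ ⟨m, q, hq, hone, rfl⟩
  rintro _ ⟨_, p, -, -, rfl⟩
  refine setIntegral_nonneg hK fun x hx => mul_nonneg ?_ (hf x hx)
  simp only [map_sum, map_pow]
  positivity

theorem lasserreBound_le_integral_div_integral (hK : MeasurableSet K) (hf : ∀ x ∈ K, 0 ≤ f x)
    (q : Fin m → MvPolynomial (Fin n) ℝ) (hq : ∀ k, (q k).totalDegree ≤ r)
    (hpos : 0 < ∫ x in K, MvPolynomial.eval x (∑ k, q k ^ 2)) :
    lasserreBound n f K r ≤ (∫ x in K, MvPolynomial.eval x (∑ k, q k ^ 2) * f x) /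
      ∫ x in K, MvPolynomial.eval x (∑ k, q k ^ 2) := by
  set I := ∫ x in K, MvPolynomial.eval x (∑ k, q k ^ 2)
  have heval (x) : MvPolynomial.eval x (∑ k, ((√I)⁻¹ • q k) ^ 2) =
      I⁻¹ * MvPolynomial.eval x (∑ k, q k ^ 2) := by
    simp only [smul_pow, ← Finset.smul_sum, MvPolynomial.smul_eval, inv_pow, Real.sq_sqrt hpos.le]
  have hle := lasserreBound_le hK hf (fun k => (√I)⁻¹ • q k)
    (fun k => (MvPolynomial.totalDegree_smul_le _ _).trans (hq k))
    (by simp only [heval, integral_const_mul, I, inv_mul_cancel₀ hpos.ne'])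
  simp only [heval, mul_assoc, integral_const_mul] at hle
  rwa [inv_mul_eq_div] at hle

theorem lasserreBound_le_of_sum_sq_comp (hK : MeasurableSet K) (hf : ∀ x ∈ K, 0 ≤ f x)
    {u : MvPolynomial (Fin n) ℝ} (hu : u.totalDegree ≤ d) {q : Fin m → ℝ[X]}
    (hq : ∀ k, (q k).natDegree ≤ r) {φ : ℝ → ℝ} (hφ : ∀ s, ∑ k, (q k).eval s ^ 2 = φ s)
    (hpos : 0 < ∫ x in K, φ (MvPolynomial.eval x u)) :
    lasserreBound n f K (r * d) ≤
      (∫ x in K, φ (MvPolynomial.eval x u) * f x) / ∫ x in K, φ (MvPolynomial.eval x u) := by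
  have heval (x) : MvPolynomial.eval x (∑ k, Polynomial.aeval u (q k) ^ 2) =
      φ (MvPolynomial.eval x u) := by
    simp only [← hφ, map_sum, map_pow, ← MvPolynomial.coe_aeval_eq_eval, RingHom.coe_coe,
      ← Polynomial.aeval_algHom_apply, Polynomial.coe_aeval_eq_eval]
  have hdeg (k) : (Polynomial.aeval u (q k)).totalDegree ≤ r * d :=
    (totalDegree_aeval_le u (q k)).trans (Nat.mul_le_mul (hq k) hu)
  have hle := lasserreBound_le_integral_div_integral hK hf (fun k => Polynomial.aeval u (q k)) hdeg
    (by simpa only [heval] using hpos)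
  simpa only [heval] using hle

end LasserreBound

section Boltzmann

variable {n : ℕ} {f : (Fin n → ℝ) → ℝ} {K : Set (Fin n → ℝ)} {t M : ℝ} {r : ℕ}

theorem setIntegral_exp_neg_div_pos (hK : IsCompact K) (hvol : 0 < volume K)
    (hf : ContinuousOn f K) (t : ℝ) : 0 < ∫ x in K, exp (-f x / t) := by
  have : NeZero (volume.restrict K) := ⟨mt Measure.restrict_eq_zero.mp hvol.ne'⟩
  exact integral_exp_pos (ContinuousOn.integrableOn_compact hK (by fun_prop))

theorem setIntegral_exp_le_setIntegral_truncExp (hK : IsCompact K) (hf : ContinuousOn f K)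
    (hf0 : ∀ x ∈ K, 0 ≤ f x) (ht : 0 < t) (r : ℕ) :
    ∫ x in K, exp (-f x / t) ≤ ∫ x in K, truncExp (2 * r) (-f x / t) :=
  setIntegral_mono_on (ContinuousOn.integrableOn_compact hK (by fun_prop))
    (ContinuousOn.integrableOn_compact hK (by fun_prop)) hK.measurableSet fun x hx =>
      exp_le_truncExp_of_nonpos r
        (div_nonpos_of_nonpos_of_nonneg (neg_nonpos.mpr (hf0 x hx)) ht.le)

theorem setIntegral_truncExp_div_le_boltzmannExp_add (hK : IsCompact K) (hvol : 0 < volume K)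
    (hf : ContinuousOn f K) (hf0 : ∀ x ∈ K, 0 ≤ f x) (hfM : ∀ x ∈ K, f x ≤ M) (ht : 0 < t)
    (hr : exp 1 * M / t ≤ r) :
    (∫ x in K, truncExp (2 * r) (-f x / t) * f x) /
        ∫ x in K, truncExp (2 * r) (-f x / t) ≤
      boltzmannExp n f K t + M / 2 ^ r := by
  have hint {g : (Fin n → ℝ) → ℝ} (hg : ContinuousOn g K) : IntegrableOn g K :=
    hg.integrableOn_compact hK
  have hae {P : (Fin n → ℝ) → Prop} (hP : ∀ x ∈ K, P x) : ∀ᵐ x ∂volume.restrict K, P x :=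
    ae_restrict_of_forall_mem hK.measurableSet hP
  have hnonpos : ∀ x ∈ K, -f x / t ≤ 0 := fun x hx =>
    div_nonpos_of_nonpos_of_nonneg (neg_nonpos.mpr (hf0 x hx)) ht.le
  have hrange : ∀ x ∈ K, exp 1 * -(-f x / t) ≤ r := fun x hx => by
    refine le_trans ?_ hr
    rw [neg_div, neg_neg, ← mul_div_assoc]
    gcongr
    exact hfM x hx
  have hmean := integral_mul_div_integral_le_add (μ := volume.restrict K) (f := f)
    (w := fun x => exp (-f x / t))
    (u := fun x => truncExp (2 * r) (-f x / t))
    (hint (by fun_prop)) (hint (by fun_prop)) (hint (by fun_prop)) (hint (by fun_prop))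
    (hae fun x _ => exp_nonneg _) (hae fun x hx => exp_le_truncExp_of_nonpos r (hnonpos x hx))
    (hae fun x hx => truncExp_le_one_add_mul_exp r (hnonpos x hx) (hrange x hx))
    (hae hf0) (hae hfM) (setIntegral_exp_neg_div_pos hK hvol hf t)
  simpa only [boltzmannExp, mul_comm (f _), one_div, inv_pow, inv_mul_eq_div] using hmean

end Boltzmann

theorem stmt4 (n : ℕ) (p : MvPolynomial (Fin n) ℝ) (d : ℕ) (hd : 1 ≤ d)
    (hdeg : p.totalDegree = d)
    (f : (Fin n → ℝ) → ℝ) (hf : f = fun x => MvPolynomial.eval x p)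
    (K : Set (Fin n → ℝ)) (hKcomp : IsCompact K) (hKpos : 0 < volume K)
    (hfnn : ∀ x ∈ K, 0 ≤ f x)
    (fmax : ℝ) (hfmax : fmax = sSup ((fun x => |f x|) '' K))
    (t : ℝ) (ht : 0 < t) (r : ℕ) (hr : Real.exp 1 * fmax / t ≤ r) :
    lasserreBound n f K (r * d) ≤ boltzmannExp n f K t + fmax / 2 ^ r := by
  have hcont : Continuous f := hf ▸ MvPolynomial.continuous_eval p
  have hle : ∀ x ∈ K, f x ≤ fmax := fun x hx => (le_abs_self _).trans <|
    hfmax ▸ le_csSup (hKcomp.image hcont.abs).bddAbove (Set.mem_image_of_mem _ hx)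
  have hu : ((-t⁻¹) • p).totalDegree ≤ d := (MvPolynomial.totalDegree_smul_le _ _).trans_eq hdeg
  have heval (x) : MvPolynomial.eval x ((-t⁻¹) • p) = -f x / t := by
    rw [MvPolynomial.smul_eval, hf]
    ring
  have hpos := (setIntegral_exp_neg_div_pos hKcomp hKpos hcont.continuousOn t).trans_le
    (setIntegral_exp_le_setIntegral_truncExp hKcomp hcont.continuousOn hfnn ht r)
  obtain ⟨q, hqdeg, hq⟩ := exists_sum_sq_eval_eq_truncExp r
  have hbound := lasserreBound_le_of_sum_sq_comp hKcomp.measurableSet hfnn hu hqdeg hq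
    (by simpa only [heval] using hpos)
  simp only [heval] at hbound
  exact hbound.trans <| setIntegral_truncExp_div_le_boltzmannExp_add hKcomp hKpos
    hcont.continuousOn hfnn hle ht hr
end

section
/- Let f : ℝⁿ → ℝ be a convex polynomial of degree d ≥ 1 and let K ⊆ ℝⁿ be a convex body. Then there is a constant c > 0 not depending on r (for instance c = (n·e + 1)·f̂_max works when f is nonnegative on K) such that for every integer r ≥ 1, f̲^(rd)_K − min_{x∈K} f(x) ≤ c/r. -/
open MeasureTheory Real

/-!
For `g ≥ 0` concave on a convex body `K` in dimension `n` and `x₀ ∈ K`, shrinking `K` towards `x₀`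
by a factor `c < 1` multiplies volumes by `c ^ n`, while concavity gives
`g (x₀ + c (x - x₀)) ≥ c g x + (1 - c) g x₀`. Raising this to the power `N + 1`, keeping the first
two binomial terms, integrating over `K` and letting `c → 1` yields the reverse Hölder inequality
`(N + 1) g(x₀) ∫ g ^ N ≤ (N + 1 + n) ∫ g ^ (N + 1)`, an equality for cones with apex over `x₀`.
Applied to `g = b - f` with `b > max f`, `f x₀ = min f` and `N = 2r`, it bounds the mean of `f`
under the sum-of-squares density proportional to `((b - f) ^ r) ^ 2`.
-/

open MvPolynomial Module
open scoped Topology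

section Convexity

variable {E : Type*} [AddCommGroup E] [Module ℝ E] {K : Set E} {g : E → ℝ} {x₀ x : E} {c : ℝ}

lemma homothety_mem_of_starConvex (hK : StarConvex ℝ x₀ K) (hc₀ : 0 ≤ c) (hc₁ : c ≤ 1)
    (hx : x ∈ K) : AffineMap.homothety x₀ c x ∈ K := by
  rw [AffineMap.homothety_eq_lineMap]
  exact hK.segment_subset hx (lineMap_mem_segment ℝ x₀ x ⟨hc₀, hc₁⟩)

lemma concaveOn_le_apply_homothety (hg : ConcaveOn ℝ K g) (hx₀ : x₀ ∈ K) (hc₀ : 0 ≤ c)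
    (hc₁ : c ≤ 1) (hx : x ∈ K) :
    c * g x + (1 - c) * g x₀ ≤ g (AffineMap.homothety x₀ c x) := by
  calc c * g x + (1 - c) * g x₀ ≤ g (c • x + (1 - c) • x₀) :=
        hg.2 hx hx₀ hc₀ (sub_nonneg.2 hc₁) (add_sub_cancel c 1)
    _ = g (AffineMap.homothety x₀ c x) := by
        rw [AffineMap.homothety_apply, vsub_eq_sub, vadd_eq_add]
        congr 1
        module

lemma concaveOn_pow_add_le_pow_apply_homothety (hg : ConcaveOn ℝ K g) (hg₀ : ∀ x ∈ K, 0 ≤ g x)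
    (hx₀ : x₀ ∈ K) (hc₀ : 0 ≤ c) (hc₁ : c ≤ 1) (hx : x ∈ K) (N : ℕ) :
    c ^ (N + 1) * g x ^ (N + 1) + (N + 1) * c ^ N * ((1 - c) * g x₀) * g x ^ N ≤
      g (AffineMap.homothety x₀ c x) ^ (N + 1) := by
  have hgx := mul_nonneg hc₀ (hg₀ x hx)
  have hgx₀ := mul_nonneg (sub_nonneg.2 hc₁) (hg₀ x₀ hx₀)
  calc c ^ (N + 1) * g x ^ (N + 1) + (N + 1) * c ^ N * ((1 - c) * g x₀) * g x ^ N
      = (c * g x) ^ (N + 1) + (N + 1 : ℕ) * (c * g x) ^ (N + 1 - 1) * ((1 - c) * g x₀) := by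
        push_cast [Nat.add_sub_cancel]
        ring
    _ ≤ (c * g x + (1 - c) * g x₀) ^ (N + 1) :=
        pow_add_mul_le_add_pow hgx (by positivity) (N + 1)
    _ ≤ g (AffineMap.homothety x₀ c x) ^ (N + 1) := by
        gcongr
        exact concaveOn_le_apply_homothety hg hx₀ hc₀ hc₁ hx

end Convexity

section HaarMeasure

variable {E : Type*} [NormedAddCommGroup E] [NormedSpace ℝ E] [FiniteDimensional ℝ E]
  [MeasurableSpace E] [BorelSpace E] {μ : Measure E} [μ.IsAddHaarMeasure]
  {K : Set E} {g : E → ℝ} {x₀ : E} {c : ℝ}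

lemma setIntegral_image_homothety {F : Type*} [NormedAddCommGroup F] [NormedSpace ℝ F]
    (hK : MeasurableSet K) (hc : c ≠ 0) (h : E → F) :
    ∫ x in AffineMap.homothety x₀ c '' K, h x ∂μ =
      |c ^ finrank ℝ E| • ∫ x in K, h (AffineMap.homothety x₀ c x) ∂μ := by
  have hderiv : ∀ x ∈ K, HasFDerivWithinAt (AffineMap.homothety x₀ c)
      (c • ContinuousLinearMap.id ℝ E) K x := fun x _ =>
    (((hasFDerivAt_id x).sub_const x₀).const_smul c |>.add_const x₀).hasFDerivWithinAt
  have hdet : (c • ContinuousLinearMap.id ℝ E).det = c ^ finrank ℝ E := by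
    simp [ContinuousLinearMap.det]
  rw [integral_image_eq_integral_abs_det_fderiv_smul μ hK hderiv
    (AffineMap.homothety_injective x₀ hc).injOn, hdet, integral_smul]

lemma pow_finrank_mul_setIntegral_comp_homothety_le_s5 (hK : MeasurableSet K)
    (hstar : StarConvex ℝ x₀ K) (hg : IntegrableOn g K μ) (hg₀ : ∀ x ∈ K, 0 ≤ g x)
    (hc₀ : 0 < c) (hc₁ : c ≤ 1) :
    c ^ finrank ℝ E * ∫ x in K, g (AffineMap.homothety x₀ c x) ∂μ ≤ ∫ x in K, g x ∂μ := by
  have himage : AffineMap.homothety x₀ c '' K ⊆ K :=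
    Set.image_subset_iff.2 fun x hx => homothety_mem_of_starConvex hstar hc₀.le hc₁ hx
  calc c ^ finrank ℝ E * ∫ x in K, g (AffineMap.homothety x₀ c x) ∂μ
      = ∫ x in AffineMap.homothety x₀ c '' K, g x ∂μ := by
        rw [setIntegral_image_homothety hK hc₀.ne', abs_of_pos (by positivity), smul_eq_mul]
    _ ≤ ∫ x in K, g x ∂μ :=
        setIntegral_mono_set hg (ae_restrict_of_forall_mem hK hg₀) himage.eventuallyLE

lemma concaveOn_pow_finrank_mul_setIntegral_le (hg : ConcaveOn ℝ K g) (hK : IsCompact K)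
    (hgc : ContinuousOn g K) (hg₀ : ∀ x ∈ K, 0 ≤ g x) (hx₀ : x₀ ∈ K) (hc₀ : 0 < c) (hc₁ : c ≤ 1)
    (N : ℕ) :
    c ^ finrank ℝ E * (c ^ (N + 1) * ∫ x in K, g x ^ (N + 1) ∂μ +
      (N + 1) * c ^ N * ((1 - c) * g x₀) * ∫ x in K, g x ^ N ∂μ) ≤
        ∫ x in K, g x ^ (N + 1) ∂μ := by
  have hstar : StarConvex ℝ x₀ K := hg.1.starConvex hx₀
  have hmaps : Set.MapsTo (AffineMap.homothety x₀ c) K K := fun x hx =>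
    homothety_mem_of_starConvex hstar hc₀.le hc₁ hx
  have hpow_int (m : ℕ) : IntegrableOn (fun x => g x ^ m) K μ :=
    (hgc.pow m).integrableOn_compact hK
  have hpow_homothety_int :
      IntegrableOn (fun x => g (AffineMap.homothety x₀ c x) ^ (N + 1)) K μ :=
    ((hgc.comp (AffineMap.homothety_continuous x₀ c).continuousOn hmaps).pow _)
      |>.integrableOn_compact hK
  calc c ^ finrank ℝ E * (c ^ (N + 1) * ∫ x in K, g x ^ (N + 1) ∂μ +
        (N + 1) * c ^ N * ((1 - c) * g x₀) * ∫ x in K, g x ^ N ∂μ)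
      = c ^ finrank ℝ E * ∫ x in K, (c ^ (N + 1) * g x ^ (N + 1) +
          (N + 1) * c ^ N * ((1 - c) * g x₀) * g x ^ N) ∂μ := by
        rw [integral_add ((hpow_int _).const_mul _) ((hpow_int _).const_mul _), integral_const_mul,
          integral_const_mul]
    _ ≤ c ^ finrank ℝ E * ∫ x in K, g (AffineMap.homothety x₀ c x) ^ (N + 1) ∂μ := by
        refine mul_le_mul_of_nonneg_left ?_ (by positivity)
        exact setIntegral_mono_on (((hpow_int _).const_mul _).add ((hpow_int _).const_mul _))
          hpow_homothety_int hK.measurableSet fun x hx =>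
            concaveOn_pow_add_le_pow_apply_homothety hg hg₀ hx₀ hc₀.le hc₁ hx N
    _ ≤ ∫ x in K, g x ^ (N + 1) ∂μ :=
        pow_finrank_mul_setIntegral_comp_homothety_le_s5 hK.measurableSet hstar (hpow_int _)
          (fun x hx => pow_nonneg (hg₀ x hx) _) hc₀ hc₁

lemma concaveOn_pow_mul_setIntegral_pow_le (hg : ConcaveOn ℝ K g) (hK : IsCompact K)
    (hgc : ContinuousOn g K) (hg₀ : ∀ x ∈ K, 0 ≤ g x) (hx₀ : x₀ ∈ K) (hc₀ : 0 < c) (hc₁ : c < 1)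
    (N : ℕ) :
    c ^ (finrank ℝ E + N) * ((N + 1) * g x₀ * ∫ x in K, g x ^ N ∂μ) ≤
      (N + 1 + finrank ℝ E) * ∫ x in K, g x ^ (N + 1) ∂μ := by
  have hshrink := concaveOn_pow_finrank_mul_setIntegral_le (μ := μ) hg hK hgc hg₀ hx₀ hc₀ hc₁.le N
  set n := finrank ℝ E
  set I₀ := ∫ x in K, g x ^ N ∂μ
  set I₁ := ∫ x in K, g x ^ (N + 1) ∂μ
  have hI₁ : 0 ≤ I₁ :=
    setIntegral_nonneg hK.measurableSet fun x hx => pow_nonneg (hg₀ x hx) _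
  have hbernoulli : 1 - c ^ (n + N + 1) ≤ (1 - c) * (N + 1 + n) := by
    have := one_add_mul_sub_le_pow (show -1 ≤ c by linarith) (n + N + 1)
    push_cast at this
    linarith
  refine le_of_mul_le_mul_left ?_ (sub_pos.2 hc₁)
  calc (1 - c) * (c ^ (n + N) * ((N + 1) * g x₀ * I₀))
      ≤ (1 - c ^ (n + N + 1)) * I₁ := by
        linear_combination hshrink
    _ ≤ (1 - c) * (N + 1 + n) * I₁ := by gcongr
    _ = (1 - c) * ((N + 1 + n) * I₁) := mul_assoc _ _ _

theorem concaveOn_apply_mul_setIntegral_pow_le (hg : ConcaveOn ℝ K g) (hK : IsCompact K)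
    (hgc : ContinuousOn g K) (hg₀ : ∀ x ∈ K, 0 ≤ g x) (hx₀ : x₀ ∈ K) (N : ℕ) :
    (N + 1) * g x₀ * ∫ x in K, g x ^ N ∂μ ≤
      (N + 1 + finrank ℝ E) * ∫ x in K, g x ^ (N + 1) ∂μ := by
  set J := (N + 1) * g x₀ * ∫ x in K, g x ^ N ∂μ
  have hlim : Filter.Tendsto (fun c : ℝ => c ^ (finrank ℝ E + N) * J) (𝓝[<] 1) (𝓝 J) := by
    have hcont : Continuous fun c : ℝ => c ^ (finrank ℝ E + N) * J := by fun_prop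
    simpa using hcont.continuousWithinAt (s := Set.Iio 1) (x := 1) |>.tendsto
  refine le_of_tendsto hlim ?_
  filter_upwards [Ioo_mem_nhdsLT zero_lt_one] with c hc
  exact concaveOn_pow_mul_setIntegral_pow_le hg hK hgc hg₀ hx₀ hc.1 hc.2 N

lemma concaveOn_setIntegral_pow_pos (hg : ConcaveOn ℝ K g) (hK : IsCompact K)
    (hKint : (interior K).Nonempty) (hgc : ContinuousOn g K) (hg₀ : ∀ x ∈ K, 0 ≤ g x)
    (hx₀ : x₀ ∈ K) (hgx₀ : 0 < g x₀) (N : ℕ) : 0 < ∫ x in K, g x ^ N ∂μ := by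
  induction N with
  | zero =>
    have hvol : 0 < μ.real K :=
      ENNReal.toReal_pos (μ.measure_pos_of_nonempty_interior hKint).ne' hK.measure_lt_top.ne
    simpa using hvol
  | succ N ih =>
    have hle := concaveOn_apply_mul_setIntegral_pow_le (μ := μ) hg hK hgc hg₀ hx₀ N
    exact pos_of_mul_pos_right (lt_of_lt_of_le (by positivity) hle) (by positivity)

end HaarMeasure

section LasserreBound

variable {n : ℕ} {K : Set (Fin n → ℝ)}

lemma le_setIntegral_mul_of_setIntegral_eq_one_s5 {α : Type*} [MeasurableSpace α] {μ : Measure α}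
    {S : Set α} {w f : α → ℝ} {m : ℝ} (hS : MeasurableSet S) (hw : ∀ x ∈ S, 0 ≤ w x)
    (hw₁ : ∫ x in S, w x ∂μ = 1) (hwf : IntegrableOn (fun x => w x * f x) S μ)
    (hm : ∀ x ∈ S, m ≤ f x) : m ≤ ∫ x in S, w x * f x ∂μ := by
  have hwint : IntegrableOn w S μ := by
    by_contra h
    exact one_ne_zero (hw₁.symm.trans (integral_undef h))
  calc m = ∫ x in S, w x * m ∂μ := by rw [integral_mul_const, hw₁, one_mul]
    _ ≤ ∫ x in S, w x * f x ∂μ :=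
        setIntegral_mono_on (hwint.mul_const m) hwf hS fun x hx =>
          mul_le_mul_of_nonneg_left (hm x hx) (hw x hx)

lemma lasserreBound_le_setIntegral_div {f : (Fin n → ℝ) → ℝ} (hK : IsCompact K)
    (hf : ContinuousOn f K) {r : ℕ} {s : MvPolynomial (Fin n) ℝ} (hs : s.totalDegree ≤ r)
    (hs₀ : 0 < ∫ x in K, eval x s ^ 2) :
    lasserreBound n f K r ≤ (∫ x in K, eval x s ^ 2 * f x) / ∫ x in K, eval x s ^ 2 := by
  set A := ∫ x in K, eval x s ^ 2
  obtain ⟨m, hm⟩ := hK.bddBelow_image hf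
  have heval (x : Fin n → ℝ) :
      eval x (∑ _i : Fin 1, (C (√A)⁻¹ * s) ^ 2) = A⁻¹ * eval x s ^ 2 := by
    simp [mul_pow, Real.sq_sqrt hs₀.le]
  refine csInf_le ⟨m, ?_⟩ ⟨1, fun _ => C (√A)⁻¹ * s, fun _ => ?_, ?_, ?_⟩
  · rintro _ ⟨k, q, -, hq, rfl⟩
    have hqc : ContinuousOn (fun x => eval x (∑ i, q i ^ 2)) K :=
      (continuous_eval _).continuousOn
    refine le_setIntegral_mul_of_setIntegral_eq_one_s5 hK.measurableSet (fun x _ => ?_) hq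
      ((hqc.mul hf).integrableOn_compact hK) fun x hx => hm (Set.mem_image_of_mem f hx)
    simp only [map_sum, map_pow]
    positivity
  · exact (totalDegree_mul _ _).trans (by simpa using hs)
  · simp_rw [heval]
    rw [integral_const_mul, inv_mul_cancel₀ hs₀.ne']
  · simp_rw [heval, mul_assoc]
    rw [integral_const_mul, div_eq_inv_mul]

variable {p : MvPolynomial (Fin n) ℝ} {d : ℕ}

lemma lasserreBound_sub_eval_le (hd : p.totalDegree ≤ d) (hK : IsCompact K)
    (hKint : (interior K).Nonempty) (hp : ConvexOn ℝ K fun x => eval x p) {x₀ : Fin n → ℝ}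
    (hx₀ : x₀ ∈ K) {b : ℝ} (hb : ∀ x ∈ K, eval x p ≤ b) (hb₀ : eval x₀ p < b) (r : ℕ) :
    lasserreBound n (fun x => eval x p) K (r * d) - eval x₀ p ≤
      n * (b - eval x₀ p) / (2 * r + n + 1) := by
  set g : (Fin n → ℝ) → ℝ := fun x => b - eval x p with hg_def
  have hpc : Continuous fun x => eval x p := continuous_eval p
  have hgc : Continuous g := by fun_prop
  have hg : ConcaveOn ℝ K g := (concaveOn_const b hp.1).sub hp
  have hg₀ : ∀ x ∈ K, 0 ≤ g x := fun x hx => sub_nonneg.2 (hb x hx)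
  have hpow_int (m : ℕ) : IntegrableOn (fun x => g x ^ m) K :=
    (hgc.pow m).continuousOn.integrableOn_compact hK
  set I := fun m : ℕ => ∫ x in K, g x ^ m
  have hI : 0 < I (2 * r) :=
    concaveOn_setIntegral_pow_pos hg hK hKint hgc.continuousOn hg₀ hx₀ (sub_pos.2 hb₀) _
  have hdeg : ((C b - p) ^ r).totalDegree ≤ r * d :=
    (totalDegree_pow _ _).trans
      (Nat.mul_le_mul_left r ((totalDegree_sub _ _).trans (by simpa using hd)))
  have hsq (x : Fin n → ℝ) : eval x ((C b - p) ^ r) ^ 2 = g x ^ (2 * r) := by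
    simp [hg_def, ← pow_mul, mul_comm]
  have hmean : ∫ x in K, g x ^ (2 * r) * eval x p = b * I (2 * r) - I (2 * r + 1) := by
    rw [← integral_const_mul, ← integral_sub ((hpow_int _).const_mul b) (hpow_int _)]
    exact integral_congr_ae (.of_forall fun x => by simp only [hg_def]; ring)
  have hbound := lasserreBound_le_setIntegral_div hK hpc.continuousOn hdeg
    (by simpa only [hsq] using hI)
  simp only [hsq, hmean] at hbound
  have hholder : (2 * r + 1) * g x₀ * I (2 * r) ≤ (2 * r + 1 + n) * I (2 * r + 1) := by
    simpa using concaveOn_apply_mul_setIntegral_pow_le (μ := volume) hg hK hgc.continuousOn hg₀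
      hx₀ (2 * r)
  refine (sub_le_sub_right hbound _).trans ?_
  rw [sub_le_iff_le_add, div_add' _ _ _ (by positivity), div_le_div_iff₀ hI (by positivity)]
  simp only [hg_def] at hholder
  linarith

theorem stmt5_general (hd : p.totalDegree ≤ d) (hK : IsCompact K) (hKint : (interior K).Nonempty)
    (hp : ConvexOn ℝ K fun x => eval x p) (r : ℕ) :
    lasserreBound n (fun x => eval x p) K (r * d) - sInf ((fun x => eval x p) '' K) ≤
      n * (sSup ((fun x => eval x p) '' K) - sInf ((fun x => eval x p) '' K)) /
        (2 * r + n + 1) := by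
  have hpc : ContinuousOn (fun x => eval x p) K := (continuous_eval p).continuousOn
  have hne : K.Nonempty := hKint.mono interior_subset
  obtain ⟨x₀, hx₀, hmin⟩ := hK.exists_sInf_image_eq hne hpc
  obtain ⟨x₁, -, hsup, hmax⟩ := hK.exists_sSup_image_eq_and_ge hne hpc
  rw [hmin, hsup]
  have hcont : Continuous fun b : ℝ => n * (b - eval x₀ p) / (2 * r + n + 1) := by fun_prop
  -- For constant `p` the density `(b - p) ^ (2 * r)` vanishes at `b = max`, hence the limit.
  refine ge_of_tendsto (hcont.continuousWithinAt (s := Set.Ioi (eval x₁ p))) ?_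
  filter_upwards [self_mem_nhdsWithin] with b (hb : eval x₁ p < b)
  exact lasserreBound_sub_eval_le hd hK hKint hp hx₀ (fun x hx => (hmax x hx).trans hb.le)
    ((hmax x₀ hx₀).trans_lt hb) r

end LasserreBound

theorem stmt5 (n : ℕ) (p : MvPolynomial (Fin n) ℝ) (d : ℕ) (hd : 1 ≤ d)
    (hdeg : p.totalDegree = d)
    (f : (Fin n → ℝ) → ℝ) (hf : f = fun x => MvPolynomial.eval x p)
    (hfconv : ConvexOn ℝ Set.univ f)
    (K : Set (Fin n → ℝ)) (hKcomp : IsCompact K) (hKconv : Convex ℝ K)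
    (hKint : (interior K).Nonempty) :
    ∃ c : ℝ, 0 < c ∧ ∀ r : ℕ, 1 ≤ r →
      lasserreBound n f K (r * d) - sInf (f '' K) ≤ c / r := by
  subst hf
  refine ⟨max (n * (sSup ((fun x => eval x p) '' K) - sInf ((fun x => eval x p) '' K))) 1,
    by positivity, fun r hr => ?_⟩
  exact (stmt5_general hdeg.le hKcomp hKint (hfconv.subset K.subset_univ hKconv) r).trans
    (div_le_div₀ (by positivity) (le_max_left _ _) (by positivity) (by linarith))
end

section
/- For every integer r ≥ 0, the univariate polynomial φ_{2r}(λ) := Σ_{k=0}^{2r} (−λ)^k/k! is a sum of squares of polynomials, i.e., there exist univariate polynomials p₁, …, p_m with φ_{2r} = p₁² + ⋯ + p_m². -/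
/-!
The Taylor polynomial `φₙ` of `e^{-λ}` satisfies `φₙ + φₙ' = (-λ)ⁿ / n!`, which for even `n` is a
sum of squares. So it suffices that `1 + D`, with `D` the derivative, has an inverse preserving sums
of squares. If `a = u + D u`, then `a² = (1 + D) (u²) + (D u)²`; iterating with `D u` in place of
`a` ends because `D` is locally nilpotent, and exhibits `(1 + D)⁻¹ (a²)` as a sum of squares.
-/

open Function Polynomial

section AddMonoidHomClass

variable {F M : Type*} [AddCommGroup M] [FunLike F M M] [AddMonoidHomClass F M M] {f : F}

theorem exists_add_apply_eq_of_iterate_eq_zero {n : ℕ} {y : M} (hy : f^[n] y = 0) :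
    ∃ x, x + f x = y ∧ f^[n] x = 0 := by
  induction n generalizing y with
  | zero => exact ⟨0, by simpa using hy.symm, rfl⟩
  | succ n ih =>
    obtain ⟨x, hx, hxn⟩ := ih (y := f y) hy
    refine ⟨y - x, ?_, ?_⟩
    · rw [map_sub, ← hx]
      abel
    · have hfx : f^[n + 1] x = 0 := by rw [iterate_succ_apply', hxn, map_zero]
      rw [iterate_map_sub, hy, hfx, sub_zero]

theorem eq_zero_of_add_apply_eq_zero_of_iterate_eq_zero {n : ℕ} {x : M} (hx : x + f x = 0)
    (hn : f^[n] x = 0) : x = 0 := by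
  induction n with
  | zero => exact hn
  | succ n ih =>
    rw [iterate_succ_apply, ← neg_eq_of_add_eq_zero_right hx, iterate_map_neg, neg_eq_zero] at hn
    exact ih hn

theorem injective_add_apply_of_locally_nilpotent (hf : ∀ x, ∃ n, f^[n] x = 0) :
    Injective fun x ↦ x + f x := by
  intro x y (hxy : x + f x = y + f y)
  obtain ⟨n, hn⟩ := hf (x - y)
  refine sub_eq_zero.mp (eq_zero_of_add_apply_eq_zero_of_iterate_eq_zero ?_ hn)
  rw [map_sub, sub_add_sub_comm, hxy, sub_self]

end AddMonoidHomClass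

section Derivation

variable {R A : Type*} [CommSemiring R] [CommRing A] [Algebra R A] {D : Derivation R A A}

theorem exists_isSumSq_add_derivation_eq_mul_self {n : ℕ} {a : A} (ha : D^[n] a = 0) :
    ∃ s, IsSumSq s ∧ s + D s = a * a := by
  induction n generalizing a with
  | zero =>
    obtain rfl : a = 0 := ha
    exact ⟨0, .zero, by simp⟩
  | succ n ih =>
    obtain ⟨u, rfl, hu⟩ := exists_add_apply_eq_of_iterate_eq_zero ha
    obtain ⟨s, hs, hsD⟩ := ih (a := D u) hu
    refine ⟨u * u + s, .sq_add u hs, ?_⟩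
    calc u * u + s + D (u * u + s)
        = u * u + D (u * u) + (s + D s) := by rw [map_add]; ring
      _ = (u + D u) * (u + D u) := by rw [hsD, D.leibniz, smul_eq_mul]; ring

theorem exists_isSumSq_add_derivation_eq (hD : ∀ a, ∃ n, D^[n] a = 0) {s : A} (hs : IsSumSq s) :
    ∃ t, IsSumSq t ∧ t + D t = s := by
  induction hs with
  | zero => exact ⟨0, .zero, by simp⟩
  | sq_add a _ ih =>
    obtain ⟨n, hn⟩ := hD a
    obtain ⟨t₁, ht₁, h₁⟩ := exists_isSumSq_add_derivation_eq_mul_self hn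
    obtain ⟨t₂, ht₂, h₂⟩ := ih
    exact ⟨t₁ + t₂, ht₁.add ht₂, by rw [map_add, add_add_add_comm, h₁, h₂]⟩

theorem isSumSq_of_isSumSq_add_derivation (hD : ∀ a, ∃ n, D^[n] a = 0) {a : A}
    (ha : IsSumSq (a + D a)) : IsSumSq a := by
  obtain ⟨t, ht, hta⟩ := exists_isSumSq_add_derivation_eq hD ha
  exact injective_add_apply_of_locally_nilpotent hD hta ▸ ht

end Derivation

theorem isSumSq_of_isSumSq_add_derivative {R : Type*} [CommRing R] {p : R[X]}
    (hp : IsSumSq (p + derivative p)) : IsSumSq p :=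
  isSumSq_of_isSumSq_add_derivation (D := derivative')
    (fun q ↦ ⟨q.natDegree + 1, iterate_derivative_eq_zero q.natDegree.lt_succ_self⟩) hp

theorem isSumSq_map {F R S : Type*} [NonUnitalNonAssocSemiring R] [NonUnitalNonAssocSemiring S]
    [FunLike F R S] [NonUnitalRingHomClass F R S] (f : F) {s : R} (hs : IsSumSq s) :
    IsSumSq (f s) := by
  induction hs with
  | zero => exact map_zero f ▸ .zero
  | sq_add a _ ih => exact map_add f _ _ ▸ map_mul f a a ▸ .sq_add (f a) ih

theorem isSumSq_inv {K : Type*} [Semifield K] {s : K} (hs : IsSumSq s) : IsSumSq s⁻¹ := by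
  have hinv : s⁻¹ * s⁻¹ * s = s⁻¹ := by simpa only [inv_inv] using mul_self_mul_inv s⁻¹
  exact hinv ▸ (IsSumSq.mul_self s⁻¹).mul hs

theorem exists_eq_sum_sq_of_isSumSq {R : Type*} [Semiring R] {s : R} (hs : IsSumSq s) :
    ∃ (m : ℕ) (p : Fin m → R), s = ∑ i, p i ^ 2 := by
  induction hs with
  | zero => exact ⟨0, Fin.elim0, by simp⟩
  | sq_add a _ ih =>
    obtain ⟨m, p, rfl⟩ := ih
    exact ⟨m + 1, Fin.cons a p, by simp [Fin.sum_univ_succ, sq]⟩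

section Taylor

variable (K : Type*) [Field K]

/-- The Taylor polynomial `φₙ(λ) = ∑_{k ≤ n} (-λ)ᵏ / k!` of `e^{-λ}`, as a formal polynomial over
`K`. In positive characteristic the terms with `k! = 0` in `K` are dropped, since `x / 0 = 0`. -/
noncomputable def expNegTaylor (n : ℕ) : K[X] :=
  ∑ k ∈ Finset.range (n + 1), C ((-1 : K) ^ k / (k.factorial : K)) * X ^ k

variable [CharZero K]

theorem expNegTaylor_add_derivative (n : ℕ) :
    expNegTaylor K n + derivative (expNegTaylor K n) =
      C ((-1 : K) ^ n / (n.factorial : K)) * X ^ n := by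
  induction n with
  | zero => simp [expNegTaylor]
  | succ n ih =>
    have hsucc : expNegTaylor K (n + 1) =
        expNegTaylor K n + C ((-1 : K) ^ (n + 1) / ((n + 1).factorial : K)) * X ^ (n + 1) :=
      Finset.sum_range_succ _ _
    have hcoeff : (-1 : K) ^ (n + 1) / ((n + 1).factorial : K) * ((n + 1 : ℕ) : K) =
        -((-1 : K) ^ n / (n.factorial : K)) := by
      have : (n.factorial : K) ≠ 0 := mod_cast n.factorial_ne_zero
      have : (n : K) + 1 ≠ 0 := n.cast_add_one_ne_zero
      rw [Nat.factorial_succ]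
      push_cast
      field_simp
      ring
    rw [hsucc, derivative_add, derivative_C_mul_X_pow, hcoeff, Nat.add_sub_cancel, C_neg]
    linear_combination ih

theorem isSumSq_expNegTaylor_two_mul (r : ℕ) : IsSumSq (expNegTaylor K (2 * r)) := by
  apply isSumSq_of_isSumSq_add_derivative
  have hcoeff : (-1 : K) ^ (2 * r) / ((2 * r).factorial : K) = ((2 * r).factorial : K)⁻¹ := by
    rw [(even_two_mul r).neg_one_pow, one_div]
  rw [expNegTaylor_add_derivative, hcoeff]
  exact (isSumSq_map C (isSumSq_inv (.natCast _))).mul ((even_two_mul r).isSquare_pow X).isSumSq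

end Taylor

theorem stmt7_general {K : Type*} [Field K] [CharZero K] (r : ℕ) :
    ∃ (m : ℕ) (p : Fin m → K[X]),
      (∑ k ∈ Finset.range (2 * r + 1), C ((-1 : K) ^ k / (k.factorial : K)) * X ^ k)
        = ∑ i, p i ^ 2 :=
  exists_eq_sum_sq_of_isSumSq (isSumSq_expNegTaylor_two_mul K r)

theorem stmt7 (r : ℕ) :
    ∃ (m : ℕ) (p : Fin m → Polynomial ℝ),
      (∑ k ∈ Finset.range (2 * r + 1),
          Polynomial.C ((-1 : ℝ) ^ k / (k.factorial : ℝ)) * Polynomial.X ^ k)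
        = ∑ i, p i ^ 2 :=
  stmt7_general r
end

section
/- Let f : ℝⁿ → ℝ be continuous, let K ⊆ ℝⁿ be compact with positive Lebesgue measure, assume f(x) ≥ 0 for all x ∈ K, and let t > 0 and r ≥ 0 be an integer. Then for every x ∈ K, φ_{2r,t}(x) ≤ P_{f/t}(x) + (f(x)/t)^{2r+1} / ((2r+1)! · ∫_K e^{−f(x')/t} dx'). -/
open MeasureTheory Real

/-- The truncation `φ_{2r}` at order `2r` of the Taylor expansion of `e^{-λ}`. -/
noncomputable def phiTrunc (r : ℕ) (l : ℝ) : ℝ :=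
  ∑ k ∈ Finset.range (2 * r + 1), (-l) ^ k / (k.factorial : ℝ)

/-! By Taylor's formula with Lagrange remainder, `φ_{2r}(λ) = e^{-λ} + e^ξ λ^{2r+1} / (2r+1)!` for
some `ξ` between `0` and `-λ`. Since `e^ξ > 0`, this gives `e^{-λ} ≤ φ_{2r}(λ)` for `λ ≥ 0`, so that
passing from `e^{-f/t}` to its truncation only increases the normalizing integral. Since `e^ξ - 1`
has the sign of `-λ`, it gives `φ_{2r}(λ) ≤ e^{-λ} + λ^{2r+1} / (2r+1)!`, which bounds the
numerator. -/

theorem exists_exp_eq_sum_add_lagrange (m : ℕ) (x : ℝ) :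
    ∃ ξ ∈ Set.uIcc 0 x, exp x =
      ∑ k ∈ Finset.range m, x ^ k / (k.factorial : ℝ) + exp ξ * x ^ m / (m.factorial : ℝ) := by
  rcases m with _ | n
  · exact ⟨x, Set.right_mem_uIcc, by simp⟩
  rcases eq_or_ne 0 x with rfl | hx
  · exact ⟨0, Set.left_mem_uIcc, by simp [Finset.sum_range_succ']⟩
  have iteratedDeriv_exp (k : ℕ) : iteratedDeriv k exp = exp := by
    rw [iteratedDeriv_eq_iterate, iter_deriv_exp]
  have taylor_exp : taylorWithinEval exp n (Set.uIcc 0 x) 0 x =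
      ∑ k ∈ Finset.range (n + 1), x ^ k / (k.factorial : ℝ) := by
    rw [taylor_within_apply]
    refine Finset.sum_congr rfl fun k _ => ?_
    rw [iteratedDerivWithin_eq_iteratedDeriv (uniqueDiffOn_uIcc hx) contDiff_exp.contDiffAt
      Set.left_mem_uIcc, iteratedDeriv_exp, exp_zero, sub_zero, smul_eq_mul, mul_one,
      inv_mul_eq_div]
  obtain ⟨ξ, hξ, remainder⟩ :=
    taylor_mean_remainder_lagrange_iteratedDeriv (n := n) hx contDiff_exp.contDiffOn
  rw [taylor_exp, iteratedDeriv_exp, sub_zero] at remainder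
  exact ⟨ξ, Set.uIoo_subset_uIcc_self hξ, sub_eq_iff_eq_add'.mp remainder⟩

theorem exists_phiTrunc_eq_exp_neg_add (r : ℕ) (l : ℝ) :
    ∃ ξ ∈ Set.uIcc 0 (-l), phiTrunc r l =
      exp (-l) + exp ξ * (l ^ (2 * r + 1) / ((2 * r + 1).factorial : ℝ)) := by
  obtain ⟨ξ, hξ, h⟩ := exists_exp_eq_sum_add_lagrange (2 * r + 1) (-l)
  refine ⟨ξ, hξ, ?_⟩
  rw [h, phiTrunc, (odd_two_mul_add_one r).neg_pow]
  ring

theorem exp_neg_le_phiTrunc (r : ℕ) {l : ℝ} (hl : 0 ≤ l) : exp (-l) ≤ phiTrunc r l := by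
  obtain ⟨ξ, -, h⟩ := exists_phiTrunc_eq_exp_neg_add r l
  rw [h]
  exact le_add_of_nonneg_right (by positivity)

theorem phiTrunc_le_exp_neg_add (r : ℕ) (l : ℝ) :
    phiTrunc r l ≤ exp (-l) + l ^ (2 * r + 1) / ((2 * r + 1).factorial : ℝ) := by
  obtain ⟨ξ, hξ, h⟩ := exists_phiTrunc_eq_exp_neg_add r l
  rw [h]
  gcongr
  rcases le_total 0 l with hl | hl
  · have hξ_nonpos : ξ ≤ 0 := (Set.uIcc_of_ge (neg_nonpos.mpr hl) ▸ hξ).2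
    exact mul_le_of_le_one_left (by positivity) (exp_le_one_iff.mpr hξ_nonpos)
  · have hξ_nonneg : 0 ≤ ξ := (Set.uIcc_of_le (neg_nonneg.mpr hl) ▸ hξ).1
    have hpow : l ^ (2 * r + 1) / ((2 * r + 1).factorial : ℝ) ≤ 0 :=
      div_nonpos_of_nonpos_of_nonneg ((odd_two_mul_add_one r).pow_nonpos hl) (by positivity)
    exact mul_le_of_one_le_left hpow (one_le_exp hξ_nonneg)

theorem phiTrunc_nonneg (r : ℕ) (l : ℝ) : 0 ≤ phiTrunc r l := by
  rcases le_total 0 l with hl | hl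
  · exact (exp_pos _).le.trans (exp_neg_le_phiTrunc r hl)
  · exact Finset.sum_nonneg fun k _ =>
      div_nonneg (pow_nonneg (neg_nonneg.mpr hl) k) k.factorial.cast_nonneg

theorem continuous_phiTrunc (r : ℕ) : Continuous (phiTrunc r) := by
  unfold phiTrunc
  fun_prop

theorem integrableOn_phiTrunc_comp {α : Type*} [TopologicalSpace α] [T2Space α]
    [MeasurableSpace α] [OpensMeasurableSpace α] {μ : Measure α} [IsFiniteMeasureOnCompacts μ]
    {g : α → ℝ} {K : Set α} (r : ℕ) (hg : ContinuousOn g K) (hK : IsCompact K) :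
    IntegrableOn (fun y => phiTrunc r (g y)) K μ :=
  ((continuous_phiTrunc r).comp_continuousOn hg).integrableOn_compact hK

section Integral

variable {α : Type*} [MeasurableSpace α] {μ : Measure α} {g : α → ℝ} {r : ℕ}

theorem integrable_exp_neg_of_integrable_phiTrunc (hg : AEMeasurable g μ) (hg0 : 0 ≤ᵐ[μ] g)
    (hint : Integrable (fun y => phiTrunc r (g y)) μ) :
    Integrable (fun y => exp (-g y)) μ := by
  refine hint.mono' hg.neg.exp.aestronglyMeasurable ?_
  filter_upwards [hg0] with y hy
  rw [norm_of_nonneg (exp_pos _).le]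
  exact exp_neg_le_phiTrunc r hy

theorem integral_exp_neg_le_integral_phiTrunc (hg0 : 0 ≤ᵐ[μ] g)
    (hint : Integrable (fun y => phiTrunc r (g y)) μ) :
    ∫ y, exp (-g y) ∂μ ≤ ∫ y, phiTrunc r (g y) ∂μ :=
  integral_mono_of_nonneg (.of_forall fun _ => (exp_pos _).le) hint
    (hg0.mono fun _ hy => exp_neg_le_phiTrunc r hy)

theorem stmt9_general [NeZero μ] (hg : AEMeasurable g μ) (hg0 : 0 ≤ᵐ[μ] g)
    (hint : Integrable (fun y => phiTrunc r (g y)) μ) (x : α) :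
    phiTrunc r (g x) / ∫ y, phiTrunc r (g y) ∂μ
      ≤ exp (-g x) / ∫ y, exp (-g y) ∂μ
        + g x ^ (2 * r + 1) / (((2 * r + 1).factorial : ℝ) * ∫ y, exp (-g y) ∂μ) := by
  have hpos : 0 < ∫ y, exp (-g y) ∂μ :=
    integral_exp_pos (integrable_exp_neg_of_integrable_phiTrunc hg hg0 hint)
  calc phiTrunc r (g x) / ∫ y, phiTrunc r (g y) ∂μ
      ≤ phiTrunc r (g x) / ∫ y, exp (-g y) ∂μ :=
        div_le_div_of_nonneg_left (phiTrunc_nonneg r _) hpos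
          (integral_exp_neg_le_integral_phiTrunc hg0 hint)
    _ ≤ (exp (-g x) + g x ^ (2 * r + 1) / ((2 * r + 1).factorial : ℝ)) /
          ∫ y, exp (-g y) ∂μ :=
        div_le_div_of_nonneg_right (phiTrunc_le_exp_neg_add r _) hpos.le
    _ = _ := by rw [add_div, div_div]

end Integral

theorem stmt9 (n : ℕ) (f : (Fin n → ℝ) → ℝ) (hf : Continuous f)
    (K : Set (Fin n → ℝ)) (hKcomp : IsCompact K) (hKpos : 0 < volume K)
    (hfnn : ∀ x ∈ K, 0 ≤ f x)
    (t : ℝ) (ht : 0 < t) (r : ℕ) (x : Fin n → ℝ) (hx : x ∈ K) :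
    phiTrunc r (f x / t) / (∫ x' in K, phiTrunc r (f x' / t))
      ≤ Real.exp (-f x / t) / (∫ x' in K, Real.exp (-f x' / t))
        + (f x / t) ^ (2 * r + 1) /
            (((2 * r + 1).factorial : ℝ) * ∫ x' in K, Real.exp (-f x' / t)) := by
  have : NeZero (volume K) := ⟨hKpos.ne'⟩
  have hft : Continuous fun y => f y / t := hf.div_const t
  simpa only [neg_div] using stmt9_general hft.aemeasurable
    (ae_restrict_of_forall_mem hKcomp.measurableSet fun y hy => div_nonneg (hfnn y hy) ht.le)
    (integrableOn_phiTrunc_comp r hft.continuousOn hKcomp) x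
end

section
/- Let M > 0, t > 0, and let r ≥ 1 be an integer with r ≥ e·M/t. Then 2·M^{2(r+1)}·e^{M/t} / (t^{2r+1}·(2r+1)!) < M/2^r. -/
/-!
In terms of `x = M / t`, the claim divided by `M` reads
`2 * x ^ (2r + 1) * e ^ x / (2r + 1)! < 1 / 2 ^ r`. Since `e * x ≤ r` gives `e ^ x ≤ 2 ^ r`, the
numerator times `2 ^ r` is at most `(2x) ^ (2r + 1)`. As `2x ≤ 2r / e < (2r + 1) / e`, this power
is below `(2r + 1)!` by the estimate `(n / e) ^ n ≤ n!`, which compares the `n`-th term of the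
series of `e ^ n` with its sum.
-/

open Real

theorem div_exp_one_pow_le_factorial (n : ℕ) : (n / exp 1) ^ n ≤ (n.factorial : ℝ) := by
  have hterm : (n : ℝ) ^ n / n.factorial ≤ exp 1 ^ n := by
    simpa only [← exp_nat_mul, mul_one] using pow_div_factorial_le_exp (n : ℝ) n.cast_nonneg n
  rwa [div_pow, div_le_comm₀ (by positivity) (by positivity)]

theorem pow_lt_factorial_of_exp_one_mul_lt {y : ℝ} {n : ℕ} (hy : 0 ≤ y) (h : exp 1 * y < n) :
    y ^ n < n.factorial := by
  have hn : n ≠ 0 := by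
    have hpos : (0 : ℝ) < n := lt_of_le_of_lt (by positivity) h
    exact_mod_cast hpos.ne'
  calc y ^ n < (n / exp 1) ^ n :=
        pow_lt_pow_left₀ ((lt_div_iff₀' (exp_pos 1)).2 h) hy hn
    _ ≤ n.factorial := div_exp_one_pow_le_factorial n

theorem exp_le_two_pow_of_two_mul_le {x : ℝ} {n : ℕ} (h : 2 * x ≤ n) : exp x ≤ 2 ^ n := by
  have half_le_log_two : 1 / 2 ≤ log 2 := by linarith [log_two_gt_d9]
  calc exp x ≤ exp (n * log 2) := by
        gcongr
        calc x ≤ n * (1 / 2) := by linarith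
          _ ≤ n * log 2 := by gcongr
    _ = 2 ^ n := by rw [exp_nat_mul, exp_log two_pos]

theorem two_mul_pow_mul_exp_div_factorial_lt {x : ℝ} {r : ℕ} (hx : 0 ≤ x) (hr : exp 1 * x ≤ r) :
    2 * x ^ (2 * r + 1) * exp x / (2 * r + 1).factorial < 1 / 2 ^ r := by
  have hexp : exp x ≤ 2 ^ r :=
    exp_le_two_pow_of_two_mul_le <|
      (mul_le_mul_of_nonneg_right exp_one_gt_two.le hx).trans hr
  have hfactorial : (2 * x) ^ (2 * r + 1) < (2 * r + 1).factorial :=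
    pow_lt_factorial_of_exp_one_mul_lt (by positivity) (by push_cast; linarith)
  rw [div_lt_div_iff₀ (by positivity) (by positivity), one_mul]
  calc 2 * x ^ (2 * r + 1) * exp x * 2 ^ r
      ≤ 2 * x ^ (2 * r + 1) * 2 ^ r * 2 ^ r := by gcongr
    _ = (2 * x) ^ (2 * r + 1) := by ring
    _ < (2 * r + 1).factorial := hfactorial

theorem stmt12 (M t : ℝ) (hM : 0 < M) (ht : 0 < t) (r : ℕ) (hr1 : 1 ≤ r)
    (hr : Real.exp 1 * M / t ≤ r) :
    2 * M ^ (2 * (r + 1)) * Real.exp (M / t) /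
        (t ^ (2 * r + 1) * ((2 * r + 1).factorial : ℝ))
      < M / 2 ^ r := by
  have hratio : exp 1 * (M / t) ≤ r := by rwa [← mul_div_assoc]
  calc 2 * M ^ (2 * (r + 1)) * exp (M / t) / (t ^ (2 * r + 1) * (2 * r + 1).factorial)
      = M * (2 * (M / t) ^ (2 * r + 1) * exp (M / t) / (2 * r + 1).factorial) := by
        rw [div_pow]; field_simp; ring
    _ < M * (1 / 2 ^ r) :=
        mul_lt_mul_of_pos_left
          (two_mul_pow_mul_exp_div_factorial_lt (by positivity) hratio) hM
    _ = M / 2 ^ r := mul_one_div M _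
end

section
/- Let f : ℝⁿ → ℝ be continuous and let K ⊆ ℝⁿ be a convex body. Then lim_{t → 0⁺} E_t[f] = min_{x∈K} f(x). -/
open MeasureTheory Real

/-!
Integrating the pointwise inequality `(y - b) e^{-y/t} ≤ t e^{-b/t}` at `y = f x`, and bounding the
partition function below by Markov's inequality, `e^{-b/t} μ {f ≤ b} ≤ ∫ e^{-f/t} ∂μ`, yields
`E_t[f] ≤ b + t μ(X) / μ {f ≤ b}` for every level `b` such that `{f ≤ b}` has positive measure.
Such `b` may be taken arbitrarily close to the essential infimum `m` of `f`, while `m ≤ E_t[f]`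
always, so `E_t[f] → m`. On a convex body, every point is a limit of interior points, so the
essential infimum of a continuous function is its infimum.
-/

open Filter Set Topology

section GibbsMean

variable {X : Type*} [MeasurableSpace X] {μ : Measure X} {f : X → ℝ} {m b t : ℝ}

/-- The mean of `f` under the Gibbs measure with energy `f`, temperature `t` and reference measure
`μ`. The Boltzmann expectation over `K` is the case where `μ` is the restriction of Lebesgue measure
to `K`. -/
noncomputable def gibbsMean (μ : Measure X) (f : X → ℝ) (t : ℝ) : ℝ :=
  (∫ x, f x * exp (-f x / t) ∂μ) / ∫ x, exp (-f x / t) ∂μ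

lemma sub_mul_exp_neg_div_le (ht : 0 < t) (y b : ℝ) :
    (y - b) * exp (-y / t) ≤ t * exp (-b / t) := by
  have h_le : y - b ≤ t * exp ((y - b) / t) := by
    rw [← div_le_iff₀' ht]
    linarith [add_one_le_exp ((y - b) / t)]
  calc (y - b) * exp (-y / t)
      ≤ t * exp ((y - b) / t) * exp (-y / t) := by gcongr
    _ = t * exp (-b / t) := by rw [mul_assoc, ← exp_add]; ring_nf

lemma integrable_exp_neg_div [IsFiniteMeasure μ] (hf : AEMeasurable f μ)
    (hm : ∀ᵐ x ∂μ, m ≤ f x) (ht : 0 ≤ t) : Integrable (fun x ↦ exp (-f x / t)) μ := by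
  refine .of_bound (by fun_prop) (exp (-m / t)) ?_
  filter_upwards [hm] with x hx
  rw [norm_of_nonneg (exp_nonneg _)]
  gcongr

lemma integrable_mul_exp_neg_div [IsFiniteMeasure μ] (hf : AEMeasurable f μ)
    (hm : ∀ᵐ x ∂μ, m ≤ f x) (ht : 0 < t) : Integrable (fun x ↦ f x * exp (-f x / t)) μ := by
  refine integrable_of_le_of_le (by fun_prop) ?_ ?_
    ((integrable_exp_neg_div hf hm ht.le).const_mul m) (integrable_const t)
  · filter_upwards [hm] with x hx
    gcongr
  · exact ae_of_all _ fun x ↦ by simpa using sub_mul_exp_neg_div_le ht (f x) 0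

lemma exp_neg_div_mul_measureReal_le_integral (ht : 0 < t)
    (h_exp : Integrable (fun x ↦ exp (-f x / t)) μ) (b : ℝ) :
    exp (-b / t) * μ.real {x | f x ≤ b} ≤ ∫ x, exp (-f x / t) ∂μ := by
  have h_iff (x : X) : exp (-b / t) ≤ exp (-f x / t) ↔ f x ≤ b := by
    rw [exp_le_exp, div_le_div_iff_of_pos_right ht, neg_le_neg_iff]
  simpa only [h_iff] using
    mul_meas_ge_le_integral_of_nonneg (ae_of_all _ fun _ ↦ exp_nonneg _) h_exp (exp (-b / t))

lemma integral_mul_exp_neg_div_le [IsFiniteMeasure μ] (ht : 0 < t)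
    (h_exp : Integrable (fun x ↦ exp (-f x / t)) μ)
    (h_mul : Integrable (fun x ↦ f x * exp (-f x / t)) μ) (b : ℝ) :
    ∫ x, f x * exp (-f x / t) ∂μ ≤
      b * ∫ x, exp (-f x / t) ∂μ + t * exp (-b / t) * μ.real univ := by
  have h_const : Integrable (fun _ ↦ t * exp (-b / t)) μ := integrable_const _
  calc ∫ x, f x * exp (-f x / t) ∂μ
      ≤ ∫ x, (b * exp (-f x / t) + t * exp (-b / t)) ∂μ :=
        integral_mono h_mul ((h_exp.const_mul b).add h_const) fun x ↦ by
          linarith [sub_mul_exp_neg_div_le ht (f x) b]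
    _ = b * ∫ x, exp (-f x / t) ∂μ + t * exp (-b / t) * μ.real univ := by
        rw [integral_add (h_exp.const_mul b) h_const, integral_const_mul, integral_const,
          smul_eq_mul, mul_comm (μ.real univ)]

variable [IsFiniteMeasure μ]

lemma le_gibbsMean [NeZero μ] (hf : AEMeasurable f μ) (hm : ∀ᵐ x ∂μ, m ≤ f x) (ht : 0 < t) :
    m ≤ gibbsMean μ f t := by
  have h_exp := integrable_exp_neg_div hf hm ht.le
  rw [gibbsMean, le_div_iff₀ (integral_exp_pos h_exp), ← integral_const_mul]
  refine integral_mono_ae (h_exp.const_mul m) (integrable_mul_exp_neg_div hf hm ht) ?_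
  filter_upwards [hm] with x hx
  gcongr

lemma gibbsMean_le (hf : AEMeasurable f μ) (hm : ∀ᵐ x ∂μ, m ≤ f x) (ht : 0 < t)
    (hb : 0 < μ.real {x | f x ≤ b}) :
    gibbsMean μ f t ≤ b + t * (μ.real univ / μ.real {x | f x ≤ b}) := by
  have h_exp := integrable_exp_neg_div hf hm ht.le
  have h_markov := exp_neg_div_mul_measureReal_le_integral ht h_exp b
  have h_pos : 0 < ∫ x, exp (-f x / t) ∂μ := lt_of_lt_of_le (by positivity) h_markov
  rw [gibbsMean, div_le_iff₀ h_pos]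
  calc ∫ x, f x * exp (-f x / t) ∂μ
      ≤ b * ∫ x, exp (-f x / t) ∂μ + t * exp (-b / t) * μ.real univ :=
        integral_mul_exp_neg_div_le ht h_exp (integrable_mul_exp_neg_div hf hm ht) b
    _ = b * ∫ x, exp (-f x / t) ∂μ + t * (μ.real univ / μ.real {x | f x ≤ b}) *
          (exp (-b / t) * μ.real {x | f x ≤ b}) := by field_simp
    _ ≤ b * ∫ x, exp (-f x / t) ∂μ + t * (μ.real univ / μ.real {x | f x ≤ b}) *
          ∫ x, exp (-f x / t) ∂μ := by gcongr
    _ = (b + t * (μ.real univ / μ.real {x | f x ≤ b})) * ∫ x, exp (-f x / t) ∂μ := by ring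

-- Together, `hm` and `h_freq` say that `m` is the essential infimum of `f`.
theorem tendsto_gibbsMean (hf : AEMeasurable f μ) (hm : ∀ᵐ x ∂μ, m ≤ f x)
    (h_freq : ∀ b > m, ∃ᶠ x in ae μ, f x ≤ b) :
    Tendsto (gibbsMean μ f) (𝓝[>] 0) (𝓝 m) := by
  have : NeZero μ := ⟨fun h_zero ↦ h_freq (m + 1) (by linarith) (by simp [h_zero])⟩
  refine tendsto_order.2 ⟨fun a ha ↦ ?_, fun a ha ↦ ?_⟩
  · filter_upwards [self_mem_nhdsWithin] with t ht
    exact ha.trans_le (le_gibbsMean hf hm ht)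
  · obtain ⟨b, hmb, hba⟩ := exists_between ha
    have h_pos : 0 < μ.real {x | f x ≤ b} :=
      ENNReal.toReal_pos (frequently_ae_iff.1 (h_freq b hmb)) (measure_ne_top _ _)
    have h_lim : Tendsto (fun t ↦ b + t * (μ.real univ / μ.real {x | f x ≤ b})) (𝓝[>] 0) (𝓝 b) :=
      (Continuous.tendsto' (by fun_prop) 0 b (by simp)).mono_left nhdsWithin_le_nhds
    filter_upwards [self_mem_nhdsWithin, h_lim.eventually_lt_const hba] with t ht h_lt
    exact (gibbsMean_le hf hm ht h_pos).trans_lt h_lt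

end GibbsMean

section Support

variable {X : Type*} [TopologicalSpace X] [MeasurableSpace X] {μ : Measure X} {K : Set X}

lemma closure_interior_subset_support_restrict [OpensMeasurableSpace X] [μ.IsOpenPosMeasure] :
    closure (interior K) ⊆ (μ.restrict K).support :=
  closure_minimal
    (by simpa only [Measure.support_eq_univ, inter_univ] using
      Measure.interior_inter_support (μ := μ) (s := K))
    Measure.isClosed_support

lemma frequently_ae_restrict_of_eventually_nhdsWithin {p : X → Prop} {x : X}
    (hK : MeasurableSet K) (hx : x ∈ (μ.restrict K).support) (hp : ∀ᶠ y in 𝓝[K] x, p y) :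
    ∃ᶠ y in ae (μ.restrict K), p y := by
  have h_pos : 0 < μ.restrict K {y | y ∈ K → p y} :=
    (Measure.mem_support_iff_forall x).1 hx _ (eventually_nhdsWithin_iff.1 hp)
  have h_freq : ∃ᶠ y in ae (μ.restrict K), y ∈ K → p y := frequently_ae_iff.2 h_pos.ne'
  exact h_freq.mp ((ae_restrict_mem hK).mono fun _ hy h_imp ↦ h_imp hy)

theorem stmt16_general [OpensMeasurableSpace X] {f : X → ℝ} (hf : ContinuousOn f K)
    (hK : MeasurableSet K) (hK_fin : μ K ≠ ⊤) (hK_ne : K.Nonempty)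
    (hK_supp : K ⊆ (μ.restrict K).support) (hf_bdd : BddBelow (f '' K)) :
    Tendsto (gibbsMean (μ.restrict K) f) (𝓝[>] 0) (𝓝 (sInf (f '' K))) := by
  have : IsFiniteMeasure (μ.restrict K) := isFiniteMeasure_restrict.2 hK_fin
  refine tendsto_gibbsMean (hf.aemeasurable hK) ?_ fun b hb ↦ ?_
  · filter_upwards [ae_restrict_mem hK] with x hx
    exact csInf_le hf_bdd (mem_image_of_mem f hx)
  · obtain ⟨_, ⟨x, hx, rfl⟩, hxb⟩ := exists_lt_of_csInf_lt (hK_ne.image f) hb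
    have h_near : ∀ᶠ y in 𝓝[K] x, f y ≤ b := (hf x hx).eventually_le_const hxb
    exact frequently_ae_restrict_of_eventually_nhdsWithin hK (hK_supp hx) h_near

end Support

theorem stmt16 (n : ℕ) (f : (Fin n → ℝ) → ℝ) (hf : Continuous f)
    (K : Set (Fin n → ℝ)) (hKcomp : IsCompact K) (hKconv : Convex ℝ K)
    (hKint : (interior K).Nonempty) :
    Filter.Tendsto (fun t => boltzmannExp n f K t) (nhdsWithin 0 (Set.Ioi 0))
      (nhds (sInf (f '' K))) := by
  have hK_subset : K ⊆ closure (interior K) :=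
    hKconv.closure_interior_eq_closure_of_nonempty_interior hKint ▸ subset_closure
  exact stmt16_general hf.continuousOn hKcomp.measurableSet hKcomp.measure_ne_top
    (hKint.mono interior_subset) (hK_subset.trans closure_interior_subset_support_restrict)
    (hKcomp.bddBelow_image hf.continuousOn)
end

section
/- Let f : ℝⁿ → ℝ be continuous and let K ⊆ ℝⁿ be a convex body. Then min_{x∈K} f(x) = inf{ ∫_K h(x) f(x) dx : h a sum of squares of polynomials with ∫_K h(x) dx = 1 }, where the infimum is over sum-of-squares polynomial densities of arbitrary degree. -/
open MeasureTheory Real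

/-!
Let `f` have minimum `m` on the compact support of `μ`. A density `h` is nonnegative, so
`∫ h f ∂μ ≥ m ∫ h ∂μ = m`. Conversely let `c > m` and `w = f - c`, which is negative somewhere on
the support. The negative part `w⁻` satisfies `∫ (w⁻)² w = -∫ (w⁻)³ < 0`. As `g ↦ ∫ g² w` is
continuous for the uniform norm, the Stone-Weierstrass theorem replaces `w⁻` by a polynomial `p`
with `∫ p² w < 0`, that is `∫ p² f < c ∫ p²`. So `p² / ∫ p²` is a density under which `f` has mean
below `c`.
-/

section CompactSpace

variable {X : Type*} [TopologicalSpace X] [CompactSpace X] [MeasurableSpace X]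
  (μ : Measure X) [IsFiniteMeasure μ]

lemma integrable_continuousMap [OpensMeasurableSpace X] (g : C(X, ℝ)) : Integrable g μ :=
  g.continuous.integrable_of_hasCompactSupport (HasCompactSupport.of_compactSpace g)

lemma exists_integral_sq_mul_neg [OpensMeasurableSpace X] [μ.IsOpenPosMeasure] {w : C(X, ℝ)}
    {x₀ : X} (hx₀ : w x₀ < 0) : ∃ φ : C(X, ℝ), ∫ x, (φ ^ 2 * w) x ∂μ < 0 := by
  let φ : C(X, ℝ) := w⁻
  have hφ : 0 ≤ φ := negPart_nonneg w
  have hφx₀ : φ x₀ ≠ 0 := (lt_max_of_lt_left (neg_pos.2 hx₀)).ne'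
  have hcube : φ ^ 2 * w = -φ ^ 3 := by
    ext x
    change max (-w x) 0 ^ 2 * w x = -max (-w x) 0 ^ 3
    rcases max_cases (-w x) 0 with ⟨h, -⟩ | ⟨h, -⟩ <;> rw [h] <;> ring
  have hpos : 0 < ∫ x, (φ ^ 3) x ∂μ :=
    integral_pos_of_integrable_nonneg_nonzero (φ ^ 3).continuous (integrable_continuousMap μ _)
      (fun x ↦ pow_nonneg (hφ x) 3) (pow_ne_zero 3 hφx₀)
  refine ⟨φ, ?_⟩
  simpa only [hcube, ContinuousMap.neg_apply, integral_neg, neg_lt_zero] using hpos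

variable [BorelSpace X]

lemma continuous_integral_continuousMap {E : Type*} [NormedAddCommGroup E] [NormedSpace ℝ E]
    [SecondCountableTopologyEither X E] : Continuous fun g : C(X, E) ↦ ∫ x, g x ∂μ := by
  have h := continuous_integral.comp (ContinuousMap.toLp (E := E) 1 μ ℝ).continuous
  refine h.congr fun g ↦ integral_congr_ae ?_
  exact ContinuousMap.coeFn_toLp μ g

variable [μ.IsOpenPosMeasure] {A : Subalgebra ℝ C(X, ℝ)}

lemma exists_mem_integral_sq_mul_neg (hA : A.SeparatesPoints) {w : C(X, ℝ)} {x₀ : X}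
    (hx₀ : w x₀ < 0) : ∃ p ∈ A, ∫ x, (p ^ 2 * w) x ∂μ < 0 := by
  have hcont : Continuous fun g : C(X, ℝ) ↦ ∫ x, (g ^ 2 * w) x ∂μ :=
    (continuous_integral_continuousMap μ).comp (by fun_prop)
  obtain ⟨φ, hφ⟩ := exists_integral_sq_mul_neg μ hx₀
  have hφA : φ ∈ closure (A : Set C(X, ℝ)) :=
    ContinuousMap.continuousMap_mem_subalgebra_closure_of_separatesPoints A hA φ
  obtain ⟨p, hp, hpA⟩ := mem_closure_iff.1 hφA _ (isOpen_lt hcont continuous_const) hφ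
  exact ⟨p, hpA, hp⟩

lemma exists_mem_integral_sq_eq_one_integral_sq_mul_lt (hA : A.SeparatesPoints) {f : C(X, ℝ)}
    {x₀ : X} {c : ℝ} (hc : f x₀ < c) :
    ∃ p ∈ A, ∫ x, p x ^ 2 ∂μ = 1 ∧ ∫ x, p x ^ 2 * f x ∂μ < c := by
  obtain ⟨p, hpA, hp⟩ := exists_mem_integral_sq_mul_neg μ hA
    (w := f - ContinuousMap.const X c) (x₀ := x₀) (sub_neg.2 hc)
  obtain ⟨x₁, hx₁⟩ : ∃ x, p x ≠ 0 := DFunLike.ne_iff.1 (show p ≠ 0 by rintro rfl; simp at hp)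
  set I := ∫ x, p x ^ 2 ∂μ
  have hI : 0 < I :=
    integral_pos_of_integrable_nonneg_nonzero (p ^ 2).continuous
      (integrable_continuousMap μ (p ^ 2)) (fun x ↦ sq_nonneg (p x)) (pow_ne_zero 2 hx₁)
  have hmean : ∫ x, p x ^ 2 * f x ∂μ < c * I := by
    have hsub : ∫ x, (p ^ 2 * (f - ContinuousMap.const X c)) x ∂μ =
        ∫ x, p x ^ 2 * f x ∂μ - ∫ x, p x ^ 2 * c ∂μ := by
      simp only [mul_sub, ContinuousMap.sub_apply]
      exact integral_sub (integrable_continuousMap μ _) (integrable_continuousMap μ _)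
    rw [hsub, integral_mul_const] at hp
    linarith
  have hsq (x : X) : ((√I)⁻¹ • p) x ^ 2 = I⁻¹ * p x ^ 2 := by
    rw [ContinuousMap.smul_apply, smul_eq_mul, mul_pow, inv_pow, Real.sq_sqrt hI.le]
  refine ⟨(√I)⁻¹ • p, A.smul_mem hpA _, ?_, ?_⟩
  · simp only [hsq, integral_const_mul]
    exact inv_mul_cancel₀ hI.ne'
  · simp only [hsq, mul_assoc, integral_const_mul]
    rwa [inv_mul_lt_iff₀ hI, mul_comm I]

end CompactSpace

section PolynomialFunctions

variable {σ R : Type*} [CommSemiring R] [TopologicalSpace R] [IsTopologicalSemiring R]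

/-- Restriction of polynomials in the variables `σ` to continuous functions on `s ⊆ R^σ`, the
multivariate analogue of `Polynomial.toContinuousMapOnAlgHom`. -/
noncomputable def mvPolynomialToContinuousMapOn (s : Set (σ → R)) :
    MvPolynomial σ R →ₐ[R] C(s, R) :=
  MvPolynomial.aeval fun i ↦ ⟨fun x ↦ x.1 i, (continuous_apply i).comp continuous_subtype_val⟩

lemma mvPolynomialToContinuousMapOn_apply (s : Set (σ → R)) (p : MvPolynomial σ R) (x : s) :
    mvPolynomialToContinuousMapOn s p x = MvPolynomial.eval x.1 p := by
  induction p using MvPolynomial.induction_on with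
  | C a => simp [mvPolynomialToContinuousMapOn]
  | add p q hp hq => simp [hp, hq]
  | mul_X p i hp =>
    rw [map_mul, ContinuousMap.mul_apply, hp]
    simp [mvPolynomialToContinuousMapOn]

lemma separatesPoints_range_mvPolynomialToContinuousMapOn (s : Set (σ → R)) :
    (mvPolynomialToContinuousMapOn s).range.SeparatesPoints := by
  intro x y hxy
  obtain ⟨i, hi⟩ := Function.ne_iff.1 (Subtype.coe_ne_coe.2 hxy)
  refine ⟨_, ⟨_, ⟨MvPolynomial.X i, rfl⟩, rfl⟩, ?_⟩
  simpa only [RingHom.coe_coe, AlgHom.toRingHom_eq_coe,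
    mvPolynomialToContinuousMapOn_apply, MvPolynomial.eval_X] using hi

end PolynomialFunctions

section Support

variable {X : Type*} [TopologicalSpace X] [MeasurableSpace X] {μ : Measure X}

lemma support_restrict_eq_self [OpensMeasurableSpace X] [μ.IsOpenPosMeasure] {K : Set X}
    (hK : IsClosed K) (hKint : K ⊆ closure (interior K)) : (μ.restrict K).support = K := by
  apply Set.Subset.antisymm
  · exact Measure.support_restrict_subset.trans
      (Set.inter_subset_left.trans hK.closure_subset)
  · have hint : interior K ⊆ (μ.restrict K).support := by
      simpa only [Measure.support_eq_univ, Set.inter_univ] using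
        Measure.interior_inter_support (μ := μ) (s := K)
    exact hKint.trans (closure_minimal hint Measure.isClosed_support)

variable [HereditarilyLindelofSpace X]

lemma restrict_support_eq_self : μ.restrict μ.support = μ :=
  Measure.restrict_eq_self_of_ae_mem Measure.support_mem_ae

variable [OpensMeasurableSpace X]

lemma isOpenPosMeasure_comap_support : (μ.comap ((↑) : μ.support → X)).IsOpenPosMeasure := by
  refine ⟨?_⟩
  rintro _ ⟨V, hV, rfl⟩ ⟨x, hxV⟩
  have hpos : 0 < μ V := (Measure.mem_support_iff_forall x.1).1 x.2 V (hV.mem_nhds hxV)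
  have hcomap : μ.comap (↑) (((↑) : μ.support → X) ⁻¹' V) = μ V := by
    rw [comap_subtype_coe_apply Measure.isClosed_support.measurableSet,
      Subtype.image_preimage_val, Set.inter_comm,
      ← Measure.restrict_apply hV.measurableSet, restrict_support_eq_self]
  exact hcomap.trans_ne hpos.ne'

lemma integral_comap_support (g : X → ℝ) :
    ∫ x : μ.support, g x ∂μ.comap (↑) = ∫ x, g x ∂μ := by
  rw [integral_subtype_comap Measure.isClosed_support.measurableSet, restrict_support_eq_self]

lemma integrable_of_continuousOn_support [IsFiniteMeasureOnCompacts μ]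
    (hμ : IsCompact μ.support) {g : X → ℝ} (hg : ContinuousOn g μ.support) : Integrable g μ := by
  simpa only [IntegrableOn, restrict_support_eq_self] using
    hg.integrableOn_compact' hμ Measure.isClosed_support.measurableSet (μ := μ)

end Support

section SumsOfSquares

variable {σ : Type*}

/-- The means `∫ h f ∂μ` of `f` over all densities `h` with respect to `μ` that are sums of squares
of polynomials. -/
def sosMeans (μ : Measure (σ → ℝ)) (f : (σ → ℝ) → ℝ) : Set ℝ :=
  {y | ∃ (m : ℕ) (p : Fin m → MvPolynomial σ ℝ),
    (∫ x, MvPolynomial.eval x (∑ i, p i ^ 2) ∂μ) = 1 ∧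
    y = ∫ x, MvPolynomial.eval x (∑ i, p i ^ 2) * f x ∂μ}

lemma eval_sum_sq_nonneg {ι R : Type*} [CommRing R] [LinearOrder R] [IsStrictOrderedRing R]
    (s : Finset ι) (p : ι → MvPolynomial σ R) (x : σ → R) :
    0 ≤ MvPolynomial.eval x (∑ i ∈ s, p i ^ 2) := by
  simp only [map_sum, map_pow]
  exact Finset.sum_nonneg fun i _ ↦ sq_nonneg _

variable [Countable σ] {μ : Measure (σ → ℝ)} [IsFiniteMeasureOnCompacts μ] {f : (σ → ℝ) → ℝ}

lemma le_of_mem_sosMeans (hμ : IsCompact μ.support) (hf : ContinuousOn f μ.support) {b y : ℝ}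
    (hb : ∀ x ∈ μ.support, b ≤ f x) (hy : y ∈ sosMeans μ f) : b ≤ y := by
  obtain ⟨m, p, hp, rfl⟩ := hy
  set h : (σ → ℝ) → ℝ := fun x ↦ MvPolynomial.eval x (∑ i, p i ^ 2)
  have hcont : Continuous h := MvPolynomial.continuous_eval _
  have hmono : ∀ᵐ x ∂μ, h x * b ≤ h x * f x := by
    filter_upwards [Measure.support_mem_ae] with x hx
    exact mul_le_mul_of_nonneg_left (hb x hx) (eval_sum_sq_nonneg _ p x)
  calc b = ∫ x, h x * b ∂μ := by rw [integral_mul_const, hp, one_mul]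
    _ ≤ ∫ x, h x * f x ∂μ :=
      integral_mono_ae (integrable_of_continuousOn_support hμ (by fun_prop))
        (integrable_of_continuousOn_support hμ (by fun_prop)) hmono

lemma exists_mvPolynomial_integral_sq_eq_one_integral_sq_mul_lt (hμ : IsCompact μ.support)
    (hf : ContinuousOn f μ.support) {x₀ : σ → ℝ} (hx₀ : x₀ ∈ μ.support) {c : ℝ} (hc : f x₀ < c) :
    ∃ p : MvPolynomial σ ℝ, ∫ x, MvPolynomial.eval x p ^ 2 ∂μ = 1 ∧
      ∫ x, MvPolynomial.eval x p ^ 2 * f x ∂μ < c := by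
  have : CompactSpace μ.support := isCompact_iff_compactSpace.1 hμ
  have := isOpenPosMeasure_comap_support (μ := μ)
  have : IsFiniteMeasureOnCompacts (μ.comap ((↑) : μ.support → σ → ℝ)) :=
    IsFiniteMeasureOnCompacts.comap' μ continuous_subtype_val
      (.subtype_coe Measure.isClosed_support.measurableSet)
  let fK : C(μ.support, ℝ) := ⟨fun x ↦ f x, hf.domRestrict⟩
  obtain ⟨_, hp, hp1, hpc⟩ := exists_mem_integral_sq_eq_one_integral_sq_mul_lt
    (μ.comap (↑)) (separatesPoints_range_mvPolynomialToContinuousMapOn μ.support)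
    (f := fK) (x₀ := ⟨x₀, hx₀⟩) hc
  obtain ⟨p, rfl⟩ := AlgHom.mem_range _ |>.1 hp
  simp only [mvPolynomialToContinuousMapOn_apply] at hp1 hpc
  refine ⟨p, ?_, ?_⟩
  · rw [← integral_comap_support]
    exact hp1
  · rw [← integral_comap_support]
    exact hpc

lemma exists_mem_sosMeans_lt (hμ : IsCompact μ.support) (hf : ContinuousOn f μ.support)
    {x₀ : σ → ℝ} (hx₀ : x₀ ∈ μ.support) {c : ℝ} (hc : f x₀ < c) :
    ∃ y ∈ sosMeans μ f, y < c := by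
  obtain ⟨p, hp1, hpc⟩ := exists_mvPolynomial_integral_sq_eq_one_integral_sq_mul_lt hμ hf hx₀ hc
  exact ⟨_, ⟨1, fun _ ↦ p, by simpa using hp1, rfl⟩, by simpa using hpc⟩

end SumsOfSquares

theorem stmt17_general {σ : Type*} [Countable σ] {μ : Measure (σ → ℝ)}
    [IsFiniteMeasureOnCompacts μ] {f : (σ → ℝ) → ℝ} (hμ : IsCompact μ.support)
    (hne : μ.support.Nonempty) (hf : ContinuousOn f μ.support) :
    sInf (f '' μ.support) = sInf (sosMeans μ f) := by
  obtain ⟨x₀, hx₀, hmin⟩ := hμ.exists_isMinOn hne hf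
  have hleast : IsLeast (f '' μ.support) (f x₀) :=
    ⟨Set.mem_image_of_mem f hx₀, Set.forall_mem_image.2 hmin⟩
  obtain ⟨y, hy, -⟩ := exists_mem_sosMeans_lt hμ hf hx₀ (lt_add_one (f x₀))
  rw [hleast.csInf_eq]
  exact (csInf_eq_of_forall_ge_of_forall_gt_exists_lt ⟨y, hy⟩
    (fun _ ↦ le_of_mem_sosMeans hμ hf hmin) fun _ ↦ exists_mem_sosMeans_lt hμ hf hx₀).symm

theorem stmt17 (n : ℕ) (f : (Fin n → ℝ) → ℝ) (hf : Continuous f)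
    (K : Set (Fin n → ℝ)) (hKcomp : IsCompact K) (hKconv : Convex ℝ K)
    (hKint : (interior K).Nonempty) :
    sInf (f '' K) =
      sInf { y : ℝ | ∃ (m : ℕ) (p : Fin m → MvPolynomial (Fin n) ℝ),
        (∫ x in K, MvPolynomial.eval x (∑ i, p i ^ 2)) = 1 ∧
        y = ∫ x in K, MvPolynomial.eval x (∑ i, p i ^ 2) * f x } := by
  have hsupp : (volume.restrict K).support = K :=
    support_restrict_eq_self hKcomp.isClosed (subset_closure.trans
      (hKconv.closure_interior_eq_closure_of_nonempty_interior hKint).ge)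
  have hgeneral := stmt17_general (μ := volume.restrict K) (hsupp.symm ▸ hKcomp)
    (hsupp.symm ▸ hKint.mono interior_subset) hf.continuousOn
  rwa [hsupp] at hgeneral
end
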